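/- arXiv:2507.00252 — 8 statements merged into one kernel-verified Lean document; each statement's English description precedes it below -/
import Mathlib

section
/- There exists an absolute constant C > 0 such that for every integer n ≥ 2, every simple graph G on n vertices admits a biclique cover of size at most C · n² / log₂ n. -/
/-- A biclique cover of a simple graph `G`: a finite family of pairs of disjoint
vertex sets `(A i, B i)` such that every pair in `A i × B i` is an edge of `G`,
and every edge of `G` is covered by at least one biclique. -/
def IsBicliqueCover {V : Type*} (G : SimpleGraph V) {m : ℕ}
    (A B : Fin m → Finset V) : Prop :=
  (∀ i, Disjoint (A i) (B i)) ∧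
  (∀ i, ∀ a ∈ A i, ∀ b ∈ B i, G.Adj a b) ∧
  (∀ u v, G.Adj u v → ∃ i, (u ∈ A i ∧ v ∈ B i) ∨ (v ∈ A i ∧ u ∈ B i))

/-- A biclique partition: a biclique cover in which every edge is covered by
exactly one biclique. -/
def IsBicliquePartition {V : Type*} (G : SimpleGraph V) {m : ℕ}
    (A B : Fin m → Finset V) : Prop :=
  (∀ i, Disjoint (A i) (B i)) ∧
  (∀ i, ∀ a ∈ A i, ∀ b ∈ B i, G.Adj a b) ∧
  (∀ u v, G.Adj u v → ∃! i, (u ∈ A i ∧ v ∈ B i) ∨ (v ∈ A i ∧ u ∈ B i))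

/-- The size of a biclique cover: the sum of `|A i| + |B i|`. -/
def coverSize {V : Type*} {m : ℕ} (A B : Fin m → Finset V) : ℕ :=
  ∑ i, ((A i).card + (B i).card)

/-! Cut the `n` vertices into about `n / k` blocks of size at most `k`. For a block `p` and each
`S ⊆ p`, the set `S` forms a biclique with the set of all vertices whose neighbourhood inside `p`
is exactly `S`. For fixed `p` the second sides partition the vertex set and so cost `n` in total,
while the first sides cost at most `2 ^ k * k`. With `k` about `(log₂ n) / 2` this is `O(n)` for
each of the `O(n / log₂ n)` blocks. -/

open Finset

section BicliqueCover

variable {V : Type*}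

lemma exists_isBicliqueCover_of_fintype {ι : Type*} [Fintype ι] {G : SimpleGraph V}
    {A B : ι → Finset V} (hadj : ∀ i, G.IsCompleteBetween (A i) (B i))
    (hcov : ∀ u v, G.Adj u v → ∃ i, (u ∈ A i ∧ v ∈ B i) ∨ (v ∈ A i ∧ u ∈ B i)) :
    ∃ (m : ℕ) (A' B' : Fin m → Finset V), IsBicliqueCover G A' B' ∧
      coverSize A' B' = ∑ i, (#(A i) + #(B i)) := by
  let e := Fintype.equivFin ι
  refine ⟨Fintype.card ι, A ∘ e.symm, B ∘ e.symm, ⟨fun i ↦ ?_, fun i a ha b hb ↦ ?_,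
    fun u v huv ↦ ?_⟩, e.symm.sum_comp fun i ↦ #(A i) + #(B i)⟩
  · exact disjoint_coe.1 (hadj (e.symm i)).disjoint
  · exact hadj (e.symm i) ha hb
  · obtain ⟨i, hi⟩ := hcov u v huv
    exact ⟨e i, by simpa using hi⟩

lemma exists_finpartition_card_le [DecidableEq V] (s : Finset V) {k : ℕ} (hk : 0 < k) :
    ∃ P : Finpartition s, #P.parts ≤ #s / k + 1 ∧ ∀ p ∈ P.parts, #p ≤ k := by
  by_cases hs : #s / k + 1 ≤ #s
  · obtain ⟨P, hP, hcard⟩ := Finpartition.exists_equipartition_card_eq s (Nat.succ_ne_zero _) hs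
    refine ⟨P, hcard.le, fun p hp ↦ ?_⟩
    have hdiv : #s / (#s / k + 1) < k :=
      Nat.div_lt_of_lt_mul (Nat.lt_mul_of_div_lt (Nat.lt_succ_self _) hk)
    calc #p ≤ #s / #P.parts + 1 := hP.card_part_le_average_add_one hp
      _ = #s / (#s / k + 1) + 1 := by rw [hcard]
      _ ≤ k := hdiv
  · refine ⟨⊥, ?_, fun p hp ↦ ?_⟩
    · rw [Finpartition.card_bot]
      exact (not_le.1 hs).le
    · obtain ⟨a, -, rfl⟩ := Finpartition.mem_bot_iff.1 hp
      rwa [card_singleton]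

lemma sum_card_powerset_le (p : Finset V) : ∑ S ∈ p.powerset, #S ≤ 2 ^ #p * #p := by
  rw [← card_powerset, ← smul_eq_mul]
  exact sum_le_card_nsmul _ _ _ fun S hS ↦ card_le_card (mem_powerset.1 hS)

section TraceClass

variable [Fintype V] [DecidableEq V] (G : SimpleGraph V) [DecidableRel G.Adj]

/-- The set of vertices whose neighbourhood inside `p` is exactly `S`. It forms a biclique with
`S`, and is the second side of the bicliques that make up the cover. -/
def traceClass (p S : Finset V) : Finset V := {v | p ∩ G.neighborFinset v = S}

variable {G} in
lemma mem_traceClass {p S : Finset V} {v : V} :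
    v ∈ traceClass G p S ↔ p ∩ G.neighborFinset v = S :=
  mem_filter_univ v

lemma isCompleteBetween_traceClass (p S : Finset V) :
    G.IsCompleteBetween S (traceClass G p S) := by
  intro u hu v hv
  rw [mem_coe, ← mem_traceClass.1 hv, mem_inter, SimpleGraph.mem_neighborFinset] at hu
  exact hu.2.symm

lemma sum_card_traceClass (p : Finset V) :
    ∑ S ∈ p.powerset, #(traceClass G p S) = Fintype.card V :=
  (card_eq_sum_card_fiberwise fun _ _ ↦ mem_powerset.2 inter_subset_left).symm

end TraceClass

variable [Fintype V] (G : SimpleGraph V)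

lemma exists_isBicliqueCover_of_forall_mem (P : Finset (Finset V)) (hP : ∀ v, ∃ p ∈ P, v ∈ p) :
    ∃ (m : ℕ) (A B : Fin m → Finset V), IsBicliqueCover G A B ∧
      coverSize A B ≤ ∑ p ∈ P, (2 ^ #p * #p + Fintype.card V) := by
  classical
  have hcov (u v : V) (huv : G.Adj u v) :
      ∃ i : P.sigma powerset, u ∈ i.1.2 ∧ v ∈ traceClass G i.1.1 i.1.2 := by
    obtain ⟨p, hp, hup⟩ := hP u
    exact ⟨⟨⟨p, p ∩ G.neighborFinset v⟩, by simp [hp]⟩, by simp [hup, huv.symm],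
      mem_traceClass.2 rfl⟩
  obtain ⟨m, A, B, hAB, hsize⟩ := exists_isBicliqueCover_of_fintype
    (fun i : P.sigma powerset ↦ isCompleteBetween_traceClass G i.1.1 i.1.2)
    fun u v huv ↦ (hcov u v huv).imp fun _ ↦ .inl
  refine ⟨m, A, B, hAB, ?_⟩
  calc coverSize A B = ∑ p ∈ P, ∑ S ∈ p.powerset, (#S + #(traceClass G p S)) := by
        rw [hsize, sum_coe_sort (P.sigma powerset) fun i ↦ #i.2 + #(traceClass G i.1 i.2),
          sum_sigma]
    _ = ∑ p ∈ P, (∑ S ∈ p.powerset, #S + Fintype.card V) := by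
        simp only [sum_add_distrib, sum_card_traceClass]
    _ ≤ ∑ p ∈ P, (2 ^ #p * #p + Fintype.card V) := by
        gcongr with p
        exact sum_card_powerset_le p

theorem exists_isBicliqueCover_coverSize_le {k : ℕ} (hk : 0 < k) :
    ∃ (m : ℕ) (A B : Fin m → Finset V), IsBicliqueCover G A B ∧
      coverSize A B ≤ (Fintype.card V / k + 1) * (2 ^ k * k + Fintype.card V) := by
  classical
  obtain ⟨P, hP, hPk⟩ := exists_finpartition_card_le (univ : Finset V) hk
  obtain ⟨m, A, B, hAB, hsize⟩ :=
    exists_isBicliqueCover_of_forall_mem G P.parts fun v ↦ P.exists_mem (mem_univ v)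
  refine ⟨m, A, B, hAB, hsize.trans ?_⟩
  calc ∑ p ∈ P.parts, (2 ^ #p * #p + Fintype.card V)
      ≤ #P.parts * (2 ^ k * k + Fintype.card V) := by
        refine sum_le_card_nsmul _ _ _ fun p hp ↦ ?_
        have := hPk p hp
        gcongr
        norm_num
    _ ≤ (Fintype.card V / k + 1) * (2 ^ k * k + Fintype.card V) := by gcongr; exact hP

end BicliqueCover

lemma two_pow_succ_mul_succ_le (k : ℕ) : 2 ^ (k + 1) * (k + 1) ≤ 4 * 4 ^ k :=
  calc 2 ^ (k + 1) * (k + 1) ≤ 2 ^ (k + 1) * 2 ^ (k + 1) :=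
        Nat.mul_le_mul_left _ Nat.lt_two_pow_self.le
    _ = 4 ^ (k + 1) := by rw [← mul_pow]; norm_num
    _ = 4 * 4 ^ k := pow_succ' 4 k

lemma four_pow_log_two_div_two_le {n : ℕ} (hn : n ≠ 0) : 4 ^ (Nat.log 2 n / 2) ≤ n :=
  calc 4 ^ (Nat.log 2 n / 2) = 2 ^ (2 * (Nat.log 2 n / 2)) := by rw [pow_mul]; norm_num
    _ ≤ 2 ^ Nat.log 2 n := Nat.pow_le_pow_right two_pos (Nat.mul_div_le _ 2)
    _ ≤ n := Nat.pow_log_le_self 2 hn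

lemma logb_two_le_two_mul_log_div_two_succ (n : ℕ) :
    Real.logb 2 n ≤ 2 * (Nat.log 2 n / 2 + 1 : ℕ) := by
  calc Real.logb 2 n ≤ (Nat.log 2 n + 1 : ℕ) := by
        have h := (Nat.lt_floor_add_one (Real.logb (2 : ℕ) n)).le
        rw [Real.natFloor_logb_natCast] at h
        exact_mod_cast h
    _ ≤ 2 * (Nat.log 2 n / 2 + 1 : ℕ) := by
        norm_cast
        omega

lemma exists_blockSize_le_div_logb {n : ℕ} (hn : 2 ≤ n) :
    ∃ k : ℕ, 0 < k ∧
      (((n / k + 1) * (2 ^ k * k + n) : ℕ) : ℝ) ≤ 20 * (n : ℝ) ^ 2 / Real.logb 2 n := by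
  obtain ⟨k, hk⟩ : ∃ k, k = Nat.log 2 n / 2 + 1 := ⟨_, rfl⟩
  have hlog_pos : 0 < Real.logb 2 n := Real.logb_pos one_lt_two (by exact_mod_cast hn)
  have hlog : Real.logb 2 n ≤ 2 * k := hk ▸ logb_two_le_two_mul_log_div_two_succ n
  have hpow : 2 ^ k * k ≤ 4 * n := by
    rw [hk]
    exact (two_pow_succ_mul_succ_le _).trans
      (Nat.mul_le_mul_left 4 (four_pow_log_two_div_two_le (by omega)))
  have hkn : k ≤ n := by
    have := Nat.log_lt_self 2 (show n ≠ 0 by omega)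
    omega
  have hblocks : (n / k + 1) * k ≤ 2 * n := by
    linarith [Nat.div_mul_le_self n k, add_one_mul (n / k) k]
  have htotal : (n / k + 1) * (2 ^ k * k + n) * k ≤ 10 * n ^ 2 := by
    calc (n / k + 1) * (2 ^ k * k + n) * k = (n / k + 1) * k * (2 ^ k * k + n) := by ring
      _ ≤ 2 * n * (4 * n + n) := by gcongr
      _ = 10 * n ^ 2 := by ring
  refine ⟨k, by omega, ?_⟩
  rw [le_div_iff₀ hlog_pos]
  calc (((n / k + 1) * (2 ^ k * k + n) : ℕ) : ℝ) * Real.logb 2 n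
      ≤ ((n / k + 1) * (2 ^ k * k + n) : ℕ) * (2 * k) := by gcongr
    _ = 2 * ((n / k + 1) * (2 ^ k * k + n) * k : ℕ) := by push_cast; ring
    _ ≤ 2 * (10 * n ^ 2 : ℕ) := by gcongr
    _ = 20 * (n : ℝ) ^ 2 := by push_cast; ring

/-- Every simple graph on `n ≥ 2` vertices has a biclique cover of size
`O(n² / log₂ n)`. -/
theorem stmt_0 :
    ∃ C : ℝ, 0 < C ∧ ∀ n : ℕ, 2 ≤ n → ∀ (V : Type) [Fintype V],
      Fintype.card V = n → ∀ G : SimpleGraph V,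
      ∃ (m : ℕ) (A B : Fin m → Finset V),
        IsBicliqueCover G A B ∧
        (coverSize A B : ℝ) ≤ C * (n : ℝ) ^ 2 / Real.logb 2 n := by
  refine ⟨20, by norm_num, fun n hn V _ hV G ↦ ?_⟩
  obtain ⟨k, hk, hbound⟩ := exists_blockSize_le_div_logb hn
  obtain ⟨m, A, B, hAB, hsize⟩ := exists_isBicliqueCover_coverSize_le G hk
  rw [hV] at hsize
  exact ⟨m, A, B, hAB, (Nat.cast_le.2 hsize).trans hbound⟩
end

section
/- Let t ≥ 1 be an integer and let G be a simple graph containing no K_{t,t} subgraph, i.e., there do not exist disjoint vertex sets S and T with |S| = |T| = t such that every pair (s, u) ∈ S × T is an edge of G. If G admits a biclique cover of size s, then G has at most t · s edges. -/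
/-! In a graph without `K_{t,t}`, every biclique has a side with fewer than `t` vertices, as
otherwise `t`-subsets of both sides would span a `K_{t,t}`. A biclique with sides `A` and `B` thus
contains at most `min |A| |B| * max |A| |B| ≤ t * (|A| + |B|)` edges, and summing over the cover
gives the bound. -/

section

open SimpleGraph

variable {V : Type*} {G : SimpleGraph V}

theorem card_lt_or_card_lt_of_completeBipartiteGraph_free {α β : Type*} [Fintype α] [Fintype β]
    (hfree : (completeBipartiteGraph α β).Free G) {A B : Finset V}
    (hAB : G.IsCompleteBetween A B) :
    A.card < Fintype.card α ∨ B.card < Fintype.card β := by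
  by_contra! ⟨hA, hB⟩
  obtain ⟨S, hSA, hS⟩ := Finset.exists_subset_card_eq hA
  obtain ⟨T, hTB, hT⟩ := Finset.exists_subset_card_eq hB
  exact hfree <| completeBipartiteGraph_isContained_iff.mpr
    ⟨S, T, hS, hT, fun _ hs _ ht => hAB (hSA hs) (hTB ht)⟩

theorem card_mul_card_le_of_completeBipartiteGraph_free {t : ℕ}
    (hfree : (completeBipartiteGraph (Fin t) (Fin t)).Free G) {A B : Finset V}
    (hAB : G.IsCompleteBetween A B) :
    A.card * B.card ≤ t * (A.card + B.card) := by
  have hmin : min A.card B.card < t := by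
    simpa only [min_lt_iff, Fintype.card_fin] using
      card_lt_or_card_lt_of_completeBipartiteGraph_free hfree hAB
  calc A.card * B.card = min A.card B.card * max A.card B.card := (min_mul_max _ _).symm
    _ ≤ t * (A.card + B.card) :=
      Nat.mul_le_mul hmin.le (max_le (Nat.le_add_right _ _) (Nat.le_add_left _ _))

theorem encard_edgeSet_le_sum_card_mul_card {ι : Type*} [Fintype ι] {A B : ι → Finset V}
    (hcover : ∀ u v, G.Adj u v → ∃ i, (u ∈ A i ∧ v ∈ B i) ∨ (v ∈ A i ∧ u ∈ B i)) :
    G.edgeSet.encard ≤ (∑ i, (A i).card * (B i).card : ℕ) := by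
  classical
  have hsub : G.edgeSet ⊆
      (Finset.univ.biUnion fun i => Finset.image₂ Sym2.mk (A i) (B i) : Finset (Sym2 V)) := by
    rintro ⟨u, v⟩ huv
    simp only [Finset.mem_coe, Finset.mem_biUnion, Finset.mem_univ, true_and]
    obtain ⟨i, ⟨hu, hv⟩ | ⟨hv, hu⟩⟩ := hcover u v huv
    · exact ⟨i, Finset.mem_image₂_of_mem hu hv⟩
    · exact ⟨i, Finset.mem_image₂.mpr ⟨v, hv, u, hu, Sym2.eq_swap⟩⟩
  refine (Set.encard_le_encard hsub).trans ?_
  rw [Set.encard_coe_eq_coe_finsetCard]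
  exact_mod_cast Finset.card_biUnion_le.trans
    (Finset.sum_le_sum fun i _ => Finset.card_image₂_le _ _ _)

theorem stmt_1_general {t : ℕ}
    (hKtt : ¬ ∃ S T : Finset V, Disjoint S T ∧ S.card = t ∧ T.card = t ∧
      ∀ s ∈ S, ∀ u ∈ T, G.Adj s u)
    {m : ℕ} {A B : Fin m → Finset V} (hcov : IsBicliqueCover G A B) :
    G.edgeSet.encard ≤ (t * coverSize A B : ℕ) := by
  obtain ⟨-, hadj, hcover⟩ := hcov
  have hfree : (completeBipartiteGraph (Fin t) (Fin t)).Free G := by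
    intro hcontained
    obtain ⟨S, T, hS, hT, hST⟩ := completeBipartiteGraph_isContained_iff.mp hcontained
    rw [Fintype.card_fin] at hS hT
    exact hKtt ⟨S, T, Finset.disjoint_coe.mp hST.disjoint, hS, hT, fun _ hs _ hu => hST hs hu⟩
  have hbiclique : ∀ i, (A i).card * (B i).card ≤ t * ((A i).card + (B i).card) := fun i =>
    card_mul_card_le_of_completeBipartiteGraph_free hfree fun a ha b hb => hadj i a ha b hb
  refine (encard_edgeSet_le_sum_card_mul_card hcover).trans ?_
  rw [coverSize, Finset.mul_sum]
  exact_mod_cast Finset.sum_le_sum fun i _ => hbiclique i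

end

/-- If `G` has no `K_{t,t}` subgraph and admits a biclique cover of size `s`,
then `G` has at most `t * s` edges. -/
theorem stmt_1 {V : Type} [Fintype V] [DecidableEq V] (t : ℕ) (ht : 1 ≤ t)
    (G : SimpleGraph V) [DecidableRel G.Adj]
    (hKtt : ¬ ∃ S T : Finset V, Disjoint S T ∧ S.card = t ∧ T.card = t ∧
      ∀ s ∈ S, ∀ u ∈ T, G.Adj s u)
    {m : ℕ} (A B : Fin m → Finset V) (hcov : IsBicliqueCover G A B) :
    G.edgeFinset.card ≤ t * coverSize A B := by
  rw [← Nat.cast_le (α := ℕ∞), ← Set.encard_coe_eq_coe_finsetCard, SimpleGraph.coe_edgeFinset]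
  exact stmt_1_general hKtt hcov
end

section
/- If a simple graph G admits a biclique cover of size s, then G has a spanning subgraph G' with at most s edges that is a 3-hop spanner of G: for every edge uv of G there is a walk of length at most 3 from u to v in G'. -/
/-!
A biclique with sides `s ∋ a` and `t ∋ b` contains the double star with centres `a` and `b`, made of
the edges from `a` to `t` and from `b` to `s`. It has at most `|s| + |t|` edges, and it joins every
`u ∈ s` to every `v ∈ t` by the walk `u, b, a, v`. Spanners are preserved by unions, so the union of
one double star per biclique of the cover spans `G`.
-/

section

variable {V : Type*} {k : ℕ} {G : SimpleGraph V} {s t : Set V} {a b : V}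

/-- `H` is a `k`-hop spanner of `G`: a subgraph, on the same vertex set, in which the endpoints of
every edge of `G` are joined by a walk of length at most `k`. -/
structure IsHopSpanner (k : ℕ) (H G : SimpleGraph V) : Prop where
  le : H ≤ G
  exists_walk : ∀ ⦃u v⦄, G.Adj u v → ∃ p : H.Walk u v, p.length ≤ k

theorem IsHopSpanner.iSup {ι : Sort*} {H G : ι → SimpleGraph V}
    (h : ∀ i, IsHopSpanner k (H i) (G i)) : IsHopSpanner k (⨆ i, H i) (⨆ i, G i) where
  le := iSup_mono fun i ↦ (h i).le
  exists_walk u v huv := by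
    obtain ⟨i, hi⟩ := SimpleGraph.iSup_adj.1 huv
    obtain ⟨p, hp⟩ := (h i).exists_walk hi
    exact ⟨p.mapLe (le_iSup H i), by rwa [SimpleGraph.Walk.length_map]⟩

theorem between_mono {s' t' : Set V} (hs : s ⊆ s') (ht : t ⊆ t') :
    G.between s t ≤ G.between s' t' :=
  fun _ _ ↦ And.imp_right <| Or.imp (And.imp (@hs _) (@ht _)) (And.imp (@ht _) (@hs _))

/-- The double star in `G` with centres `a` and `b`: the edges of `G` joining `a` to `t` or `b` to
`s`. It is meant for `a ∈ s` and `b ∈ t`, where it contains the edge `ab` if `G` does. -/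
def doubleStar (G : SimpleGraph V) (s t : Set V) (a b : V) : SimpleGraph V :=
  G.between {a} t ⊔ G.between s {b}

theorem doubleStar_le_between (ha : a ∈ s) (hb : b ∈ t) : doubleStar G s t a b ≤ G.between s t :=
  sup_le (between_mono (Set.singleton_subset_iff.2 ha) subset_rfl)
    (between_mono subset_rfl (Set.singleton_subset_iff.2 hb))

theorem exists_walk_doubleStar (h : G.IsCompleteBetween s t) (ha : a ∈ s) (hb : b ∈ t) {u v : V}
    (hu : u ∈ s) (hv : v ∈ t) : ∃ p : (doubleStar G s t a b).Walk u v, p.length ≤ 3 := by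
  have adj_b {x : V} (hx : x ∈ s) : (doubleStar G s t a b).Adj x b := .inr ⟨h hx hb, .inl ⟨hx, rfl⟩⟩
  have adj_a : (doubleStar G s t a b).Adj a v := .inl ⟨h ha hv, .inl ⟨rfl, hv⟩⟩
  exact ⟨.cons (adj_b hu) (.cons (adj_b ha).symm (.cons adj_a .nil)), le_rfl⟩

theorem isHopSpanner_doubleStar (h : G.IsCompleteBetween s t) (ha : a ∈ s) (hb : b ∈ t) :
    IsHopSpanner 3 (doubleStar G s t a b) (G.between s t) where
  le := doubleStar_le_between ha hb
  exists_walk u v := by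
    rintro ⟨-, ⟨hu, hv⟩ | ⟨hu, hv⟩⟩
    · exact exists_walk_doubleStar h ha hb hu hv
    · obtain ⟨p, hp⟩ := exists_walk_doubleStar h ha hb hv hu
      exact ⟨p.reverse, by rwa [SimpleGraph.Walk.length_reverse]⟩

theorem encard_edgeSet_between_singleton_le (G : SimpleGraph V) (a : V) (t : Set V) :
    (G.between {a} t).edgeSet.encard ≤ t.encard := by
  have edgeSet_subset : (G.between {a} t).edgeSet ⊆ (s(a, ·)) '' t := by
    rintro ⟨u, v⟩ ⟨-, ⟨rfl, hv⟩ | ⟨hu, rfl⟩⟩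
    · exact ⟨v, hv, rfl⟩
    · exact ⟨u, hu, Sym2.eq_swap⟩
  exact (Set.encard_le_encard edgeSet_subset).trans (Set.encard_image_le _ _)

theorem encard_edgeSet_doubleStar_le (G : SimpleGraph V) (s t : Set V) (a b : V) :
    (doubleStar G s t a b).edgeSet.encard ≤ s.encard + t.encard := by
  rw [doubleStar, SimpleGraph.edgeSet_sup, SimpleGraph.between_comm (s := s), add_comm]
  exact (Set.encard_union_le _ _).trans <| add_le_add
    (encard_edgeSet_between_singleton_le G a t) (encard_edgeSet_between_singleton_le G b s)

theorem exists_isHopSpanner_between (h : G.IsCompleteBetween s t) :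
    ∃ H, IsHopSpanner 3 H (G.between s t) ∧ H.edgeSet.encard ≤ s.encard + t.encard := by
  by_cases hne : s.Nonempty ∧ t.Nonempty
  · obtain ⟨⟨a, ha⟩, b, hb⟩ := hne
    exact ⟨doubleStar G s t a b, isHopSpanner_doubleStar h ha hb,
      encard_edgeSet_doubleStar_le G s t a b⟩
  · have not_adj (u v : V) : ¬ (G.between s t).Adj u v := by
      rintro ⟨-, ⟨hu, hv⟩ | ⟨hu, hv⟩⟩
      exacts [hne ⟨⟨u, hu⟩, v, hv⟩, hne ⟨⟨v, hv⟩, u, hu⟩]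
    exact ⟨⊥, ⟨bot_le, fun u v huv ↦ (not_adj u v huv).elim⟩, by simp⟩

theorem exists_isHopSpanner_iSup_between {ι : Type*} [Fintype ι] {s t : ι → Set V}
    (h : ∀ i, G.IsCompleteBetween (s i) (t i)) :
    ∃ H, IsHopSpanner 3 H (⨆ i, G.between (s i) (t i)) ∧
      H.edgeSet.encard ≤ ∑ i, ((s i).encard + (t i).encard) := by
  choose H hspanner hcard using fun i ↦ exists_isHopSpanner_between (h i)
  refine ⟨⨆ i, H i, .iSup hspanner, ?_⟩
  calc (⨆ i, H i).edgeSet.encard = (⋃ i, (H i).edgeSet).encard := by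
        rw [SimpleGraph.edgeSet_iSup]
    _ ≤ ∑ i, (H i).edgeSet.encard := Set.encard_iUnion_le_of_fintype _
    _ ≤ ∑ i, ((s i).encard + (t i).encard) := Finset.sum_le_sum fun i _ ↦ hcard i

end

namespace IsBicliqueCover

variable {V : Type*} {G : SimpleGraph V} {m : ℕ} {A B : Fin m → Finset V}

theorem isCompleteBetween (hcov : IsBicliqueCover G A B) (i : Fin m) :
    G.IsCompleteBetween (A i) (B i) :=
  fun a ha b hb ↦ hcov.2.1 i a ha b hb

theorem iSup_between_eq (hcov : IsBicliqueCover G A B) : ⨆ i, G.between (A i) (B i) = G := by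
  refine le_antisymm (iSup_le fun _ ↦ SimpleGraph.between_le) fun u v huv ↦ ?_
  obtain ⟨i, hi⟩ := hcov.2.2 u v huv
  exact SimpleGraph.iSup_adj.2 ⟨i, huv, hi.imp_right And.symm⟩

end IsBicliqueCover

theorem stmt_2_general {V : Type*} {G : SimpleGraph V} {m : ℕ} {A B : Fin m → Finset V}
    (hcov : IsBicliqueCover G A B) :
    ∃ G', IsHopSpanner 3 G' G ∧ G'.edgeSet.encard ≤ coverSize A B := by
  simpa only [hcov.iSup_between_eq, coverSize, Set.encard_coe_eq_coe_finsetCard, Nat.cast_sum,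
    Nat.cast_add] using exists_isHopSpanner_iSup_between hcov.isCompleteBetween

/-- If `G` admits a biclique cover of size `s`, then `G` has a spanning subgraph
with at most `s` edges that is a 3-hop spanner of `G`. -/
theorem stmt_2 {V : Type} (G : SimpleGraph V) {m : ℕ} (A B : Fin m → Finset V)
    (hcov : IsBicliqueCover G A B) :
    ∃ G' : SimpleGraph V, G' ≤ G ∧ G'.edgeSet.Finite ∧
      G'.edgeSet.ncard ≤ coverSize A B ∧
      ∀ u v, G.Adj u v → ∃ p : G'.Walk u v, p.length ≤ 3 := by
  obtain ⟨G', hspanner, hcard⟩ := stmt_2_general hcov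
  obtain ⟨hfinite, hncard⟩ := Set.encard_le_coe_iff_finite_ncard_le.1 hcard
  exact ⟨G', hspanner.le, hfinite, hncard, hspanner.exists_walk⟩
end

section
/- For every integer d ≥ 0 there exists a constant C_d > 0 such that for all n ≥ 2, every d-dimensional comparability bigraph on n vertices admits a biclique partition of size at most C_d · n · (log₂ n)^d. -/
/-!
A comparability bigraph is the intersection of `d` linear orders, restricted to `L × R`. Reading
binary expansions from the top, two naturals `a < b < 2 ^ k` first differ at a unique digit;
grouping the pairs by this digit and the common digits above it partitions `<` into rectangles, at
most `k` of which meet a given number, one for each position of the digit. Intersecting relations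
multiplies these multiplicities, so after passing to ranks every vertex lies in at most
`⌈log₂ n⌉ ^ d` bicliques.
-/

/-- The binary digits of `a` and `b` at position `i` are `0` and `1`, and the digits of either
number above that position form the number `p`. So `i` is the leading position at which `a` and `b`
differ. -/
def DyadicSplit (i p a b : ℕ) : Prop :=
  a / 2 ^ i = 2 * p ∧ b / 2 ^ i = 2 * p + 1

namespace DyadicSplit

variable {i j p q a b : ℕ}

lemma lt (h : DyadicSplit i p a b) : a < b := by
  obtain ⟨ha, hb⟩ := h
  by_contra! hba
  have := Nat.div_le_div_right (c := 2 ^ i) hba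
  omega

lemma div_two_pow_eq (h : DyadicSplit i p a b) (hij : i < j) : a / 2 ^ j = b / 2 ^ j := by
  obtain ⟨t, rfl⟩ := Nat.exists_eq_add_of_lt hij
  have half_eq : a / 2 ^ i / 2 = b / 2 ^ i / 2 := by
    obtain ⟨ha, hb⟩ := h
    omega
  simp only [add_assoc i, add_comm t, pow_add, pow_one, ← Nat.div_div_eq_div_mul, half_eq]

lemma index_le (h : DyadicSplit i p a b) (h' : DyadicSplit j q a b) : j ≤ i := by
  by_contra! hij
  have := h.div_two_pow_eq hij
  obtain ⟨ha, hb⟩ := h'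
  omega

lemma unique (h : DyadicSplit i p a b) (h' : DyadicSplit j q a b) : i = j ∧ p = q := by
  obtain rfl : i = j := le_antisymm (h'.index_le h) (h.index_le h')
  exact ⟨rfl, by have := h.1.symm.trans h'.1; omega⟩

lemma highDigits_lt (h : DyadicSplit i p a b) : p < b := by
  have := h.2
  have := Nat.div_le_self b (2 ^ i)
  omega

end DyadicSplit

lemma exists_dyadicSplit_of_lt {a b k : ℕ} (hab : a < b) (hb : b < 2 ^ k) :
    ∃ i < k, ∃ p, DyadicSplit i p a b := by
  induction k generalizing a b with
  | zero => simp only [pow_zero] at hb; omega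
  | succ k ih =>
    rw [pow_succ] at hb
    by_cases half_lt : a / 2 < b / 2
    · obtain ⟨i, hi, p, ha, hb⟩ := ih half_lt (by omega)
      refine ⟨i + 1, by omega, p, ?_, ?_⟩ <;> rwa [pow_succ', ← Nat.div_div_eq_div_mul]
    · exact ⟨0, by omega, a / 2, by rw [pow_zero]; omega, by rw [pow_zero]; omega⟩

lemma encard_setOf_div_two_pow_le {n k : ℕ} (a : Fin n) :
    {x : Fin k × Fin n |
      (a : ℕ) / 2 ^ (x.1 : ℕ) = 2 * x.2 ∨ (a : ℕ) / 2 ^ (x.1 : ℕ) = 2 * x.2 + 1}.encard ≤ k := by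
  calc _ ≤ (Set.univ : Set (Fin k)).encard := by
        refine Set.encard_le_encard_of_injOn (f := Prod.fst) (fun _ _ => Set.mem_univ _) ?_
        rintro ⟨i, p⟩ hp ⟨_, q⟩ hq rfl
        simp only [Set.mem_ofPred_eq] at hp hq
        exact Prod.ext rfl (Fin.ext (by dsimp only; omega))
    _ = k := by simp

/-- A partition of the relation `r` into finitely many rectangles `left x ×ˢ right x` such that
every point lies on a side of at most `k` of them. This is the analogue of a biclique partition for
a relation; the multiplicity `k` controls its size. -/
structure RectanglePartition {α : Type*} (r : α → α → Prop) (k : ℕ) where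
  length : ℕ
  left : Fin length → Set α
  right : Fin length → Set α
  rel_of_mem : ∀ x, ∀ a ∈ left x, ∀ b ∈ right x, r a b
  existsUnique_mem : ∀ a b, r a b → ∃! x, a ∈ left x ∧ b ∈ right x
  encard_le : ∀ a, {x | a ∈ left x ∨ a ∈ right x}.encard ≤ k

namespace RectanglePartition

variable {α β ι κ : Type*} {r : α → α → Prop} {k : ℕ}

/-- A rectangle partition whose rectangles are indexed by an arbitrary finite type. -/
noncomputable def ofFintype [Fintype κ] (left right : κ → Set α)
    (rel_of_mem : ∀ x, ∀ a ∈ left x, ∀ b ∈ right x, r a b)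
    (existsUnique_mem : ∀ a b, r a b → ∃! x, a ∈ left x ∧ b ∈ right x)
    (encard_le : ∀ a, {x | a ∈ left x ∨ a ∈ right x}.encard ≤ k) :
    RectanglePartition r k where
  length := Fintype.card κ
  left x := left ((Fintype.equivFin κ).symm x)
  right x := right ((Fintype.equivFin κ).symm x)
  rel_of_mem _ := rel_of_mem _
  existsUnique_mem a b hab :=
    (Fintype.equivFin κ).symm.bijective.existsUnique_iff.1 (existsUnique_mem a b hab)
  encard_le a :=
    (Set.encard_preimage_of_bijective (Fintype.equivFin κ).symm.bijective _).trans_le (encard_le a)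

/-- The rectangle partition of the order of `Fin n` by the leading digit at which two numbers
differ. A rectangle is indexed by the position of that digit and the number formed by the digits
above it, which is less than `n`. -/
noncomputable def finLT {n : ℕ} (hn : n ≤ 2 ^ k) :
    RectanglePartition (fun a b : Fin n => a < b) k :=
  ofFintype (κ := Fin k × Fin n)
    (fun x => {a | (a : ℕ) / 2 ^ (x.1 : ℕ) = 2 * x.2})
    (fun x => {b | (b : ℕ) / 2 ^ (x.1 : ℕ) = 2 * x.2 + 1})
    (fun _ _ ha _ hb => DyadicSplit.lt ⟨ha, hb⟩)
    (fun a b hab => by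
      obtain ⟨i, hi, p, hp⟩ := exists_dyadicSplit_of_lt hab (b.isLt.trans_le hn)
      refine ⟨(⟨i, hi⟩, ⟨p, hp.highDigits_lt.trans b.isLt⟩), hp,
        fun y (hy : DyadicSplit _ _ _ _) => ?_⟩
      exact Prod.ext (Fin.ext (hy.unique hp).1) (Fin.ext (hy.unique hp).2))
    encard_setOf_div_two_pow_le

/-- The pullback of a rectangle partition along a map. -/
def comap (P : RectanglePartition r k) (f : β → α) :
    RectanglePartition (fun a b => r (f a) (f b)) k where
  length := P.length
  left x := f ⁻¹' P.left x
  right x := f ⁻¹' P.right x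
  rel_of_mem x _ ha _ hb := P.rel_of_mem x _ ha _ hb
  existsUnique_mem _ _ := P.existsUnique_mem _ _
  encard_le a := P.encard_le (f a)

/-- The rectangle partition of an intersection of relations into the intersections of their
rectangles. -/
noncomputable def iInter [Fintype ι] {s : ι → α → α → Prop} {l : ι → ℕ}
    (P : ∀ j, RectanglePartition (s j) (l j)) :
    RectanglePartition (fun a b => ∀ j, s j a b) (∏ j, l j) := by
  classical
  exact ofFintype (κ := ∀ j, Fin (P j).length)
    (fun x => {a | ∀ j, a ∈ (P j).left (x j)})
    (fun x => {b | ∀ j, b ∈ (P j).right (x j)})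
    (fun x a ha b hb j => (P j).rel_of_mem (x j) a (ha j) b (hb j))
    (fun a b hab => by
      choose x hx hx_unique using fun j => (P j).existsUnique_mem a b (hab j)
      exact ⟨x, ⟨fun j => (hx j).1, fun j => (hx j).2⟩,
        fun y hy => funext fun j => hx_unique j (y j) ⟨hy.1 j, hy.2 j⟩⟩)
    (fun a => by
      calc _ ≤ (Set.univ.pi fun j => {x | a ∈ (P j).left x ∨ a ∈ (P j).right x}).encard :=
            Set.encard_mono fun x hx j _ => hx.imp (fun h => h j) (fun h => h j)
        _ = ∏ j, {x | a ∈ (P j).left x ∨ a ∈ (P j).right x}.encard :=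
            Set.encard_pi_eq_prod_encard
        _ ≤ ((∏ j, l j : ℕ) : ℕ∞) := by
            push_cast
            exact Finset.prod_le_prod' fun j _ => (P j).encard_le a)

end RectanglePartition

lemma exists_fin_card_lt_iff_lt {V α : Type*} [Fintype V] [LinearOrder α] (f : V → α) :
    ∃ rank : V → Fin (Fintype.card V), ∀ u v, rank u < rank v ↔ f u < f v := by
  let e := (Finset.univ.image f).orderIsoOfFin rfl
  have card_le : (Finset.univ.image f).card ≤ Fintype.card V := Finset.card_image_le
  refine ⟨fun v => (e.symm ⟨f v, Finset.mem_image_of_mem f (Finset.mem_univ v)⟩).castLE card_le,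
    fun u v => ?_⟩
  simp only [Fin.castLE_lt_castLE_iff, e.symm.lt_iff_lt, Subtype.mk_lt_mk]

lemma nonempty_rectanglePartition_lt {V α : Type*} [Fintype V] [LinearOrder α] (f : V → α) :
    Nonempty (RectanglePartition (fun u v => f u < f v) (Nat.clog 2 (Fintype.card V))) := by
  obtain ⟨rank, hrank⟩ := exists_fin_card_lt_iff_lt f
  simp only [← hrank]
  exact ⟨(RectanglePartition.finLT (Nat.le_pow_clog one_lt_two _)).comap rank⟩

section Bipartite

variable {V : Type*} {m k : ℕ} {A B : Fin m → Finset V}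

lemma coverSize_le_card_mul [Fintype V] (hdisj : ∀ i, Disjoint (A i) (B i))
    (hk : ∀ v, {i | v ∈ A i ∨ v ∈ B i}.encard ≤ k) :
    coverSize A B ≤ Fintype.card V * k := by
  classical
  let incident (i : Fin m) (v : V) : Prop := v ∈ A i ∨ v ∈ B i
  calc coverSize A B = ∑ i, (Finset.univ.bipartiteAbove incident i).card := by
        refine Finset.sum_congr rfl fun i _ => ?_
        rw [← Finset.card_union_of_disjoint (hdisj i)]
        congr 1
        ext v
        simp [incident]
    _ = ∑ v, (Finset.univ.bipartiteBelow incident v).card :=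
        Finset.sum_card_bipartiteAbove_eq_sum_card_bipartiteBelow incident
    _ ≤ Fintype.card V * k := by
        refine Finset.sum_le_card_nsmul _ _ _ fun v _ => ?_
        rw [← Nat.cast_le (α := ℕ∞), ← Set.encard_coe_eq_coe_finsetCard]
        simpa [Finset.bipartiteBelow, incident] using hk v

variable {G : SimpleGraph V} {L R : Set V}

lemma isBicliquePartition_of_isBipartiteWith (hG : G.IsBipartiteWith L R)
    (hA : ∀ i, ∀ a ∈ A i, a ∈ L) (hB : ∀ i, ∀ b ∈ B i, b ∈ R)
    (hadj : ∀ i, ∀ a ∈ A i, ∀ b ∈ B i, G.Adj a b)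
    (hunique : ∀ u ∈ L, ∀ v ∈ R, G.Adj u v → ∃! i, u ∈ A i ∧ v ∈ B i) :
    IsBicliquePartition G A B := by
  refine ⟨fun i => ?_, hadj, fun u v huv => ?_⟩
  · exact Finset.disjoint_left.2 fun v hvA hvB =>
      Set.disjoint_left.1 hG.disjoint (hA i v hvA) (hB i v hvB)
  · have not_mem_A {i w} (hw : w ∈ R) : w ∉ A i := fun hwA =>
      Set.disjoint_right.1 hG.disjoint hw (hA i w hwA)
    rcases hG.mem_of_adj huv with ⟨hu, hv⟩ | ⟨hu, hv⟩
    · simpa only [not_mem_A hv, false_and, or_false] using hunique u hu v hv huv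
    · simpa only [not_mem_A hu, false_and, false_or] using hunique v hv u hu huv.symm

lemma RectanglePartition.exists_isBicliquePartition [Fintype V] {r : V → V → Prop}
    (P : RectanglePartition r k) (hG : G.IsBipartiteWith L R)
    (hadj : ∀ u ∈ L, ∀ v ∈ R, (G.Adj u v ↔ r u v)) :
    ∃ (m : ℕ) (A B : Fin m → Finset V),
      IsBicliquePartition G A B ∧ coverSize A B ≤ Fintype.card V * k := by
  classical
  let A (i : Fin P.length) : Finset V := {v | v ∈ L ∧ v ∈ P.left i}
  let B (i : Fin P.length) : Finset V := {v | v ∈ R ∧ v ∈ P.right i}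
  have mem_A {i v} : v ∈ A i ↔ v ∈ L ∧ v ∈ P.left i := Finset.mem_filter_univ v
  have mem_B {i v} : v ∈ B i ↔ v ∈ R ∧ v ∈ P.right i := Finset.mem_filter_univ v
  have isPartition : IsBicliquePartition G A B := by
    refine isBicliquePartition_of_isBipartiteWith hG (fun i a ha => (mem_A.1 ha).1)
      (fun i b hb => (mem_B.1 hb).1) (fun i a ha b hb => ?_) (fun u hu v hv huv => ?_)
    · obtain ⟨haL, ha⟩ := mem_A.1 ha
      obtain ⟨hbR, hb⟩ := mem_B.1 hb
      exact (hadj a haL b hbR).2 (P.rel_of_mem i a ha b hb)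
    · simpa only [mem_A, mem_B, hu, hv, true_and] using
        P.existsUnique_mem u v ((hadj u hu v hv).1 huv)
  refine ⟨P.length, A, B, isPartition, coverSize_le_card_mul isPartition.1 fun v => ?_⟩
  exact (Set.encard_mono fun i => Or.imp (fun h => (mem_A.1 h).2) fun h => (mem_B.1 h).2).trans
    (P.encard_le v)

end Bipartite

lemma exists_isBicliquePartition_coverSize_le_clog {V ι : Type*} [Fintype V] [Fintype ι]
    {α : ι → Type*} [∀ j, LinearOrder (α j)] {G : SimpleGraph V} {L R : Set V}
    (φ : V → ∀ j, α j) (hG : G.IsBipartiteWith L R)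
    (hadj : ∀ u ∈ L, ∀ v ∈ R, (G.Adj u v ↔ ∀ j, φ u j < φ v j)) :
    ∃ (m : ℕ) (A B : Fin m → Finset V), IsBicliquePartition G A B ∧
      coverSize A B ≤ Fintype.card V * Nat.clog 2 (Fintype.card V) ^ Fintype.card ι := by
  have P (j : ι) := (nonempty_rectanglePartition_lt fun v => φ v j).some
  simpa using (RectanglePartition.iInter P).exists_isBicliquePartition hG hadj

lemma natCast_clog_two_le_two_mul_logb {n : ℕ} (hn : 2 ≤ n) :
    (Nat.clog 2 n : ℝ) ≤ 2 * Real.logb 2 n := by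
  have one_le_logb : 1 ≤ Real.logb 2 n := by
    rw [Real.le_logb_iff_rpow_le one_lt_two (by positivity), Real.rpow_one]
    exact_mod_cast hn
  have clog_lt : (Nat.clog 2 n : ℝ) < Real.logb 2 n + 1 := by
    rw [← Real.natCeil_logb_natCast, Nat.cast_ofNat]
    exact Nat.ceil_lt_add_one (by linarith)
  linarith

theorem stmt_4_general {V ι : Type*} [Fintype V] [Fintype ι] {α : ι → Type*}
    [∀ j, LinearOrder (α j)] {G : SimpleGraph V} {L R : Set V} (φ : V → ∀ j, α j)
    (hV : 2 ≤ Fintype.card V) (hG : G.IsBipartiteWith L R)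
    (hadj : ∀ u ∈ L, ∀ v ∈ R, (G.Adj u v ↔ ∀ j, φ u j < φ v j)) :
    ∃ (m : ℕ) (A B : Fin m → Finset V), IsBicliquePartition G A B ∧
      (coverSize A B : ℝ) ≤
        2 ^ Fintype.card ι * Fintype.card V * Real.logb 2 (Fintype.card V) ^ Fintype.card ι := by
  obtain ⟨m, A, B, hAB, hsize⟩ := exists_isBicliquePartition_coverSize_le_clog φ hG hadj
  refine ⟨m, A, B, hAB, ?_⟩
  calc (coverSize A B : ℝ)
      ≤ Fintype.card V * (Nat.clog 2 (Fintype.card V) : ℝ) ^ Fintype.card ι := mod_cast hsize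
    _ ≤ Fintype.card V * (2 * Real.logb 2 (Fintype.card V)) ^ Fintype.card ι := by
        gcongr
        exact natCast_clog_two_le_two_mul_logb hV
    _ = _ := by ring

/-- Every `d`-dimensional comparability bigraph on `n` vertices admits a
biclique partition of size `O(n (log₂ n)^d)`. -/
theorem stmt_4 (d : ℕ) :
    ∃ C : ℝ, 0 < C ∧ ∀ n : ℕ, 2 ≤ n → ∀ (V : Type) [Fintype V],
      Fintype.card V = n →
      ∀ (G : SimpleGraph V) (L R : Set V) (φ : V → Fin d → ℝ),
      (∀ v, v ∈ L ∨ v ∈ R) → Disjoint L R →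
      (∀ ℓ ∈ L, ∀ r ∈ R, ∀ j, φ ℓ j ≠ φ r j) →
      (∀ ℓ ∈ L, ∀ r ∈ R, (G.Adj ℓ r ↔ ∀ j, φ ℓ j < φ r j)) →
      (∀ u v, G.Adj u v → (u ∈ L ∧ v ∈ R) ∨ (u ∈ R ∧ v ∈ L)) →
      ∃ (m : ℕ) (A B : Fin m → Finset V),
        IsBicliquePartition G A B ∧
        (coverSize A B : ℝ) ≤ C * (n : ℝ) * (Real.logb 2 n) ^ d := by
  refine ⟨2 ^ d, by positivity, ?_⟩
  rintro _ hn V _ rfl G L R φ - hLR - hadj hedge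
  simpa only [Fintype.card_fin] using stmt_4_general φ hn ⟨hLR, hedge⟩ hadj
end

section
/- For all integers t ≥ 1, ℓ ≥ 1 and d ≥ 1 there exists a constant C = C(t, ℓ) > 0 such that for all n ≥ 2, every dnf-semilinear graph of complexity (t, ℓ) in dimension d on n vertices admits a biclique cover of size at most C · n · (log₂ n)^{t+1}. -/
/-! Give each vertex `u` two finite sets of labels `P u` and `Q u` such that `uv` is an edge
exactly when `P u` and `Q v` intersect. A label `i` then spans the biclique of all `u` with
`i ∈ P u` and all `v` with `i ∈ Q v`, and if label sets have at most `D` elements, then double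
counting bounds the size of this cover by `2 n D`. Disjunctions of relations take disjoint unions
of label sets, conjunctions take products, so it remains to label atomic relations with `O(log n)`
labels per vertex.

An affine inequality in `(φ u, φ v)` has the form `x u < y v`; passing to ranks, `x` and `y` may
be taken to be natural numbers of at most `log₂ n + 1` bits. Then `x u < y v` holds exactly when
at some bit position `x u` has digit `0`, `y v` has digit `1`, and the higher digits agree, so
that a position together with the digits above it can serve as a label. The last logarithmic
factor is due to the condition `u ≠ v`, labelled by a position and a digit of a numbering of the
vertices. -/

section

open Finset

lemma nat_lt_iff_exists_testBit {m n : ℕ} :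
    m < n ↔ ∃ k, m >>> (k + 1) = n >>> (k + 1) ∧ m.testBit k = false ∧ n.testBit k = true := by
  have testBit_eq_of_shiftRight_eq {k j : ℕ} (h : m >>> (k + 1) = n >>> (k + 1)) (hj : k < j) :
      m.testBit j = n.testBit j := by
    simpa [Nat.add_sub_cancel' (Nat.succ_le_of_lt hj)] using
      congrArg (Nat.testBit · (j - (k + 1))) h
  refine ⟨fun hmn => ?_, fun ⟨k, hk, hm, hn⟩ =>
    Nat.lt_of_testBit k hm hn fun j => testBit_eq_of_shiftRight_eq hk⟩
  obtain ⟨k, hk, hgt⟩ := Nat.exists_most_significant_bit (mt Nat.xor_eq_zero_iff.1 hmn.ne)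
  simp only [Nat.testBit_xor, bne_iff_ne, bne_eq_false_iff_eq] at hk hgt
  have hm : m.testBit k = false := by
    by_contra hm
    rw [Bool.not_eq_false] at hm
    have hn : n.testBit k = false := by simpa [hm] using hk.symm
    exact hmn.not_gt (Nat.lt_of_testBit k hn hm fun j hj => (hgt j hj).symm)
  refine ⟨k, Nat.eq_of_testBit_eq fun j => ?_, hm, by simpa [hm] using hk.symm⟩
  simpa only [Nat.testBit_shiftRight] using hgt (k + 1 + j) (by omega)

/-- The positions below `K` at which the binary expansion of `n` has digit `b`, each paired with the
part of `n` above that position. They serve as labels for a comparison of numbers. -/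
def bitPrefixes (K : ℕ) (b : Bool) (n : ℕ) : Finset (ℕ × ℕ) :=
  {k ∈ range K | n.testBit k = b}.image fun k => (k, n >>> (k + 1))

lemma mem_bitPrefixes {K : ℕ} {b : Bool} {n : ℕ} {p : ℕ × ℕ} :
    p ∈ bitPrefixes K b n ↔ p.1 < K ∧ n.testBit p.1 = b ∧ n >>> (p.1 + 1) = p.2 := by
  simp only [bitPrefixes, mem_image, mem_filter, mem_range, Prod.ext_iff]
  grind

lemma card_bitPrefixes_le (K : ℕ) (b : Bool) (n : ℕ) : #(bitPrefixes K b n) ≤ K :=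
  card_image_le.trans <| (card_filter_le _ _).trans_eq (card_range K)

lemma nat_lt_iff_exists_mem_bitPrefixes {K m n : ℕ} (hn : n < 2 ^ K) :
    m < n ↔ ∃ p ∈ bitPrefixes K false m, p ∈ bitPrefixes K true n := by
  simp only [mem_bitPrefixes]
  rw [nat_lt_iff_exists_testBit]
  constructor
  · rintro ⟨k, hmn, hmk, hnk⟩
    have hk : k < K := (Nat.pow_lt_pow_iff_right one_lt_two).1 <|
      (Nat.ge_two_pow_of_testBit hnk).trans_lt hn
    exact ⟨(k, n >>> (k + 1)), ⟨hk, hmk, hmn⟩, hk, hnk, rfl⟩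
  · rintro ⟨p, ⟨-, hm, hmp⟩, -, hn, hnp⟩
    exact ⟨p.1, hmp.trans hnp.symm, hm, hn⟩

lemma nat_ne_iff_exists_testBit_ne {K m n : ℕ} (hm : m < 2 ^ K) (hn : n < 2 ^ K) :
    m ≠ n ↔ ∃ k < K, m.testBit k ≠ n.testBit k := by
  refine ⟨fun h => ?_, fun ⟨k, _, hk⟩ h => hk (congrArg (Nat.testBit · k) h)⟩
  obtain ⟨k, hk⟩ := Nat.exists_testBit_ne_of_ne h
  refine ⟨k, ?_, hk⟩
  by_contra! hKk
  have hpow : 2 ^ K ≤ 2 ^ k := Nat.pow_le_pow_right two_pos hKk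
  exact hk <| (Nat.testBit_lt_two_pow (hm.trans_le hpow)).trans
    (Nat.testBit_lt_two_pow (hn.trans_le hpow)).symm

lemma exists_nat_rank {V W α : Type*} [Fintype W] [LinearOrder α] (x : V → α) (y : W → α) :
    ∃ (r : V → ℕ) (s : W → ℕ), (∀ w, s w ≤ Fintype.card W) ∧ ∀ v w, x v < y w ↔ r v < s w := by
  let rank (a : α) : ℕ := #{w | y w ≤ a}
  have rank_mono : Monotone rank := fun a b hab =>
    card_le_card <| monotone_filter_right _ fun _ _ h => h.trans hab
  refine ⟨fun v => rank (x v), fun w => rank (y w), fun w => card_le_univ _, fun v w =>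
    ⟨fun hvw => card_lt_card ?_, fun h => rank_mono.reflect_lt h⟩⟩
  refine (ssubset_iff_of_subset ?_).2 ⟨w, by simp, by simpa using hvw⟩
  exact monotone_filter_right _ fun _ _ h => h.trans hvw.le

/-- A representation of a relation `R` by intersections of finite label sets: `R v w` holds exactly
when `P v` and `Q w` share a label. Each label spans a biclique of `R`, and `D` bounds the number of
these bicliques that a given vertex belongs to on either side. -/
structure IsIntersectionLabeling {V W I : Type*} (R : V → W → Prop)
    (P : V → Finset I) (Q : W → Finset I) (D : ℕ) : Prop where
  rel_iff (v : V) (w : W) : R v w ↔ ∃ i ∈ P v, i ∈ Q w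
  card_left_le (v : V) : #(P v) ≤ D
  card_right_le (w : W) : #(Q w) ≤ D

namespace IsIntersectionLabeling

variable {V W : Type*}

lemma conj {I I' : Type*} {R R' : V → W → Prop} {P : V → Finset I} {Q : W → Finset I}
    {P' : V → Finset I'} {Q' : W → Finset I'} {D D' : ℕ}
    (h : IsIntersectionLabeling R P Q D) (h' : IsIntersectionLabeling R' P' Q' D') :
    IsIntersectionLabeling (fun v w => R v w ∧ R' v w)
      (fun v => P v ×ˢ P' v) (fun w => Q w ×ˢ Q' w) (D * D') where
  rel_iff v w := by
    simp only [h.rel_iff, h'.rel_iff, mem_product, Prod.exists]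
    grind
  card_left_le v := by
    rw [card_product]
    exact Nat.mul_le_mul (h.card_left_le v) (h'.card_left_le v)
  card_right_le w := by
    rw [card_product]
    exact Nat.mul_le_mul (h.card_right_le w) (h'.card_right_le w)

variable {ι : Type*} [Fintype ι] {I : ι → Type*} {R : ι → V → W → Prop}
  {P : ∀ i, V → Finset (I i)} {Q : ∀ i, W → Finset (I i)} {D : ℕ}

lemma iConj [DecidableEq ι] (h : ∀ i, IsIntersectionLabeling (R i) (P i) (Q i) D) :
    IsIntersectionLabeling (fun v w => ∀ i, R i v w)
      (fun v => Fintype.piFinset (P · v)) (fun w => Fintype.piFinset (Q · w))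
      (D ^ Fintype.card ι) where
  rel_iff v w := by
    simp only [(h _).rel_iff, Classical.skolem, Fintype.mem_piFinset, forall_and]
  card_left_le v := by
    rw [Fintype.card_piFinset]
    exact prod_le_pow_card _ _ _ fun i _ => (h i).card_left_le v
  card_right_le w := by
    rw [Fintype.card_piFinset]
    exact prod_le_pow_card _ _ _ fun i _ => (h i).card_right_le w

lemma iDisj (h : ∀ i, IsIntersectionLabeling (R i) (P i) (Q i) D) :
    IsIntersectionLabeling (fun v w => ∃ i, R i v w)
      (fun v => univ.sigma (P · v)) (fun w => univ.sigma (Q · w)) (Fintype.card ι * D) where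
  rel_iff v w := by
    simp only [(h _).rel_iff, Sigma.exists, mem_sigma, mem_univ, true_and]
  card_left_le v := by
    rw [card_sigma]
    exact sum_le_card_nsmul _ _ _ fun i _ => (h i).card_left_le v
  card_right_le w := by
    rw [card_sigma]
    exact sum_le_card_nsmul _ _ _ fun i _ => (h i).card_right_le w

end IsIntersectionLabeling

lemma exists_isIntersectionLabeling_lt {V W α : Type*} [Fintype W] [LinearOrder α]
    (x : V → α) (y : W → α) :
    ∃ (P : V → Finset (ℕ × ℕ)) (Q : W → Finset (ℕ × ℕ)),
      IsIntersectionLabeling (fun v w => x v < y w) P Q (Nat.log 2 (Fintype.card W) + 1) := by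
  obtain ⟨r, s, hs, hrs⟩ := exists_nat_rank x y
  refine ⟨fun v => bitPrefixes _ false (r v), fun w => bitPrefixes _ true (s w),
    fun v w => (hrs v w).trans (nat_lt_iff_exists_mem_bitPrefixes ?_),
    fun v => card_bitPrefixes_le _ _ _, fun w => card_bitPrefixes_le _ _ _⟩
  exact (hs w).trans_lt (Nat.lt_pow_succ_log_self one_lt_two _)

lemma exists_isIntersectionLabeling_ne (V : Type*) [Fintype V] :
    ∃ P Q : V → Finset (ℕ × Bool),
      IsIntersectionLabeling (· ≠ ·) P Q (Nat.log 2 (Fintype.card V) + 1) := by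
  let K := Nat.log 2 (Fintype.card V) + 1
  let num (v : V) : ℕ := Fintype.equivFin V v
  have num_injective : num.Injective := Fin.val_injective.comp (Fintype.equivFin V).injective
  have num_lt (v : V) : num v < 2 ^ K :=
    (Fintype.equivFin V v).isLt.trans (Nat.lt_pow_succ_log_self one_lt_two _)
  refine ⟨fun v => (range K).image fun k => (k, (num v).testBit k),
    fun v => (range K).image fun k => (k, !(num v).testBit k), fun u v => ?_,
    fun v => card_image_le.trans_eq (card_range K), fun v => card_image_le.trans_eq (card_range K)⟩
  rw [← num_injective.ne_iff, nat_ne_iff_exists_testBit_ne (num_lt u) (num_lt v)]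
  simp only [mem_image, mem_range]
  grind

lemma sum_card_filter_mem_le {V I : Type*} [Fintype V] [DecidableEq I] (S : Finset I)
    {P : V → Finset I} {D : ℕ} (hP : ∀ v, #(P v) ≤ D) :
    ∑ i ∈ S, #{v | i ∈ P v} ≤ Fintype.card V * D := by
  calc ∑ i ∈ S, #{v | i ∈ P v} = ∑ v, #{i ∈ S | i ∈ P v} :=
        sum_card_bipartiteAbove_eq_sum_card_bipartiteBelow fun i v => i ∈ P v
    _ ≤ Fintype.card V * D := sum_le_card_nsmul _ _ _ fun v _ =>
        (card_le_card fun _ hi => (mem_filter.1 hi).2).trans (hP v)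

lemma IsIntersectionLabeling.exists_isBicliqueCover {V I : Type*} [Fintype V] {G : SimpleGraph V}
    {P Q : V → Finset I} {D : ℕ} (h : IsIntersectionLabeling G.Adj P Q D) :
    ∃ (m : ℕ) (A B : Fin m → Finset V),
      IsBicliqueCover G A B ∧ coverSize A B ≤ 2 * (Fintype.card V * D) := by
  classical
  let S : Finset I := univ.biUnion P
  let label : Fin #S ≃ S := S.equivFin.symm
  let A (k : Fin #S) : Finset V := {u | ↑(label k) ∈ P u}
  let B (k : Fin #S) : Finset V := {v | ↑(label k) ∈ Q v}
  have adj_of_mem {k : Fin #S} {u v : V} (hu : u ∈ A k) (hv : v ∈ B k) : G.Adj u v :=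
    (h.rel_iff u v).2 ⟨label k, (mem_filter.1 hu).2, (mem_filter.1 hv).2⟩
  refine ⟨#S, A, B, ⟨fun k => disjoint_left.2 fun u hu hv => G.irrefl (adj_of_mem hu hv),
    fun k u hu v hv => adj_of_mem hu hv, fun u v huv => ?_⟩, ?_⟩
  · obtain ⟨i, hiu, hiv⟩ := (h.rel_iff u v).1 huv
    have hiS : i ∈ S := mem_biUnion.2 ⟨u, mem_univ u, hiu⟩
    exact ⟨label.symm ⟨i, hiS⟩, .inl (by simp [A, B, hiu, hiv])⟩
  · have sum_label (f : I → ℕ) : ∑ k, f (label k) = ∑ i ∈ S, f i :=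
      (label.sum_comp fun i : S => f i).trans (sum_coe_sort S f)
    calc coverSize A B = ∑ i ∈ S, #{u | i ∈ P u} + ∑ i ∈ S, #{v | i ∈ Q v} := by
          rw [coverSize, sum_add_distrib, ← sum_label, ← sum_label]
      _ ≤ Fintype.card V * D + Fintype.card V * D :=
          add_le_add (sum_card_filter_mem_le S h.card_left_le)
            (sum_card_filter_mem_le S h.card_right_le)
      _ = 2 * (Fintype.card V * D) := (two_mul _).symm

lemma exists_isBicliqueCover_of_adj_iff_exists_forall_lt {V ι τ α : Type*} [Fintype V] [Fintype ι]
    [Fintype τ] [LinearOrder α] (G : SimpleGraph V) (x y : ι → τ → V → α)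
    (hG : ∀ u v, u ≠ v → (G.Adj u v ↔ ∃ i, ∀ j, x i j u < y i j v)) :
    ∃ (m : ℕ) (A B : Fin m → Finset V), IsBicliqueCover G A B ∧
      coverSize A B ≤ 2 * Fintype.card ι * Fintype.card V *
        (Nat.log 2 (Fintype.card V) + 1) ^ (Fintype.card τ + 1) := by
  classical
  obtain ⟨P₀, Q₀, h_ne⟩ := exists_isIntersectionLabeling_ne V
  choose P Q h_lt using fun i j => exists_isIntersectionLabeling_lt (x i j) (y i j)
  have h_dnf := h_ne.conj (.iDisj fun i => .iConj (h_lt i))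
  have adj_eq : G.Adj = fun u v => u ≠ v ∧ ∃ i, ∀ j, x i j u < y i j v := by
    ext u v
    exact ⟨fun h => ⟨h.ne, (hG u v h.ne).1 h⟩, fun h => (hG u v h.1).2 h.2⟩
  rw [← adj_eq] at h_dnf
  obtain ⟨m, A, B, hcover, hsize⟩ := h_dnf.exists_isBicliqueCover
  exact ⟨m, A, B, hcover, hsize.trans_eq (by ring)⟩

lemma natLog_two_add_one_le_two_mul_logb {n : ℕ} (hn : 2 ≤ n) :
    (Nat.log 2 n + 1 : ℝ) ≤ 2 * Real.logb 2 n := by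
  have one_le_log : (1 : ℝ) ≤ Nat.log 2 n := by exact_mod_cast Nat.log_pos one_lt_two hn
  have log_le_logb : (Nat.log 2 n : ℝ) ≤ Real.logb 2 n := by
    exact_mod_cast Real.natLog_le_logb n 2
  linarith

theorem stmt_6_general {V ι τ α : Type*} [Fintype V] [Fintype ι] [Fintype τ] [LinearOrder α]
    (hV : 2 ≤ Fintype.card V) (G : SimpleGraph V) (x y : ι → τ → V → α)
    (hG : ∀ u v, u ≠ v → (G.Adj u v ↔ ∃ i, ∀ j, x i j u < y i j v)) :
    ∃ (m : ℕ) (A B : Fin m → Finset V), IsBicliqueCover G A B ∧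
      (coverSize A B : ℝ) ≤ Fintype.card ι * 2 ^ (Fintype.card τ + 2) * Fintype.card V *
        Real.logb 2 (Fintype.card V) ^ (Fintype.card τ + 1) := by
  obtain ⟨m, A, B, hcover, hsize⟩ := exists_isBicliqueCover_of_adj_iff_exists_forall_lt G x y hG
  refine ⟨m, A, B, hcover, ?_⟩
  calc (coverSize A B : ℝ)
      ≤ 2 * Fintype.card ι * Fintype.card V *
          (Nat.log 2 (Fintype.card V) + 1) ^ (Fintype.card τ + 1) := by exact_mod_cast hsize
    _ ≤ 2 * Fintype.card ι * Fintype.card V *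
          (2 * Real.logb 2 (Fintype.card V)) ^ (Fintype.card τ + 1) := by
        gcongr
        exact natLog_two_add_one_le_two_mul_logb hV
    _ = _ := by ring

end

/-- Every dnf-semilinear graph of complexity `(t, ℓ)` in dimension `d` on `n`
vertices admits a biclique cover of size `O(n (log₂ n)^{t+1})`, where the
constant depends only on `t` and `ℓ`. -/
theorem stmt_6 (t l : ℕ) (ht : 1 ≤ t) (hl : 1 ≤ l) :
    ∃ C : ℝ, 0 < C ∧ ∀ d : ℕ, 1 ≤ d → ∀ n : ℕ, 2 ≤ n →
      ∀ (V : Type) [Fintype V], Fintype.card V = n →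
      ∀ (G : SimpleGraph V) (φ : V → Fin d → ℝ)
        (a b : Fin l → Fin t → Fin d → ℝ) (c : Fin l → Fin t → ℝ),
      (∀ u v : V, u ≠ v →
        (G.Adj u v ↔ ∃ i : Fin l, ∀ j : Fin t,
          (∑ k, a i j k * φ u k) + (∑ k, b i j k * φ v k) + c i j < 0)) →
      ∃ (m : ℕ) (A B : Fin m → Finset V),
        IsBicliqueCover G A B ∧
        (coverSize A B : ℝ) ≤ C * (n : ℝ) * (Real.logb 2 n) ^ (t + 1) := by
  refine ⟨l * 2 ^ (t + 2), by positivity, ?_⟩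
  rintro d - n hn V _ rfl G φ a b c hG
  simpa only [Fintype.card_fin] using stmt_6_general hn G
    (fun i j u => (∑ k, a i j k * φ u k) + c i j) (fun i j v => -∑ k, b i j k * φ v k)
    fun u v huv => by simp only [hG u v huv, lt_neg_iff_add_neg, add_right_comm]
end

section
/- For all integers t ≥ 1, ℓ ≥ 1, d ≥ 1 and s ≥ 1 there exists a constant C = C(t, ℓ) > 0 such that for all n ≥ 2, every dnf-semilinear graph of complexity (t, ℓ) in dimension d on n vertices that contains no K_{s,s} subgraph has at most C · s · n · (log₂ n)^{t+1} edges. -/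
/-!
Moving the part of each affine form that depends on `v` to the right-hand side turns a clause of the
formula into a conjunction of `t` comparisons `x j u < y j v` between elements of a linear order.
The pairs satisfying such a conjunction are counted by induction on the number of comparisons.

Without comparisons the relation is complete, and having no `r × r` biclique between `A` and `B`
means that `A` or `B` has fewer than `r` elements. To add a comparison `f u < g v`, split at the
median `p` of the values of `g` on `B`. A related pair has both values below `p`, or both on the
other side, or `f u < p ≤ g v`. In the last case the new comparison is automatic and the bound for
the old relation applies; the first two cases are recursive, with disjoint pieces of `A` and `B` and
half as many values of `g`. Hence every comparison costs one factor `⌊log₂ n⌋ + 1`.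

The formula says nothing about the pairs `(u, u)`, so the two sides of a biclique of a clause may
overlap. A clause is therefore only known to have no `2s × 2s` biclique.
-/

open Finset Rel

section Bipartite

variable {V W α κ : Type*} {R R' : V → W → Prop} {r M : ℕ}

/-- The relation `R` has no `r × r` biclique with its first side in `A` and its second side in `B`.
When `V = W`, the two sides are allowed to overlap. -/
def BicliqueFree (R : V → W → Prop) (r : ℕ) (A : Finset V) (B : Finset W) : Prop :=
  ¬ ∃ S ⊆ A, ∃ T ⊆ B, #S = r ∧ #T = r ∧ ∀ u ∈ S, ∀ v ∈ T, R u v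

open scoped Classical in
/-- A linear bound, with factor `M`, for the Zarankiewicz problem within the relation `R`: between
any `A` and `B` without an `r × r` biclique there are at most `M * (#A + #B)` related pairs. -/
def HasLinearZarankiewiczBound (R : V → W → Prop) (r M : ℕ) : Prop :=
  ∀ A B, BicliqueFree R r A B → #(interedges R A B) ≤ M * (#A + #B)

theorem BicliqueFree.mono {A A' : Finset V} {B B' : Finset W} (h : BicliqueFree R r A B)
    (hA : A' ⊆ A) (hB : B' ⊆ B) (hR : ∀ u ∈ A', ∀ v ∈ B', R' u v → R u v) :
    BicliqueFree R' r A' B' := by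
  rintro ⟨S, hS, T, hT, hSr, hTr, hST⟩
  exact h ⟨S, hS.trans hA, T, hT.trans hB, hSr, hTr,
    fun u hu v hv ↦ hR u (hS hu) v (hT hv) (hST u hu v hv)⟩

theorem BicliqueFree.card_lt_or_card_lt {A : Finset V} {B : Finset W}
    (h : BicliqueFree R r A B) (hR : ∀ u ∈ A, ∀ v ∈ B, R u v) : #A < r ∨ #B < r := by
  by_contra! hr
  obtain ⟨S, hS, hSr⟩ := exists_subset_card_eq hr.1
  obtain ⟨T, hT, hTr⟩ := exists_subset_card_eq hr.2
  exact h ⟨S, hS, T, hT, hSr, hTr, fun u hu v hv ↦ hR u (hS hu) v (hT hv)⟩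

theorem hasLinearZarankiewiczBound_of_forall (hR : ∀ u v, R u v) :
    HasLinearZarankiewiczBound R r r := by
  classical
  intro A B h
  refine (card_interedges_le_mul R A B).trans ?_
  obtain hA | hB := h.card_lt_or_card_lt fun u _ v _ ↦ hR u v
  · calc #A * #B ≤ r * #B := by gcongr
      _ ≤ r * (#A + #B) := by gcongr; omega
  · calc #A * #B ≤ #A * r := by gcongr
      _ = r * #A := mul_comm _ _
      _ ≤ r * (#A + #B) := by gcongr; omega

variable [LinearOrder α]

theorem exists_median {s : Finset α} (hs : s.Nonempty) :
    ∃ p ∈ s, 2 * #{q ∈ s | q < p} ≤ #s ∧ 2 * #{q ∈ s | p < q} ≤ #s := by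
  let e := s.orderEmbOfFin rfl
  let i : Fin #s := ⟨#s / 2, Nat.div_lt_self hs.card_pos one_lt_two⟩
  have card_filter (P : α → Prop) [DecidablePred P] : #{q ∈ s | P q} = #{j | P (e j)} := by
    conv_lhs => rw [← map_orderEmbOfFin_univ s rfl, filter_map, card_map]
    rfl
  have card_lt : #{q ∈ s | q < e i} = #s / 2 := by
    simp only [card_filter, e.lt_iff_lt, filter_gt_eq_Iio, Fin.card_Iio, i]
  have card_gt : #{q ∈ s | e i < q} = #s - 1 - #s / 2 := by
    simp only [card_filter, e.lt_iff_lt, filter_lt_eq_Ioi, Fin.card_Ioi, i]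
  exact ⟨e i, s.orderEmbOfFin_mem rfl i, by omega, by omega⟩

open scoped Classical in
theorem card_interedges_and_lt_le_add (R : V → W → Prop) (f : V → α) (g : W → α)
    (A : Finset V) (B : Finset W) (p : α) :
    #(interedges (fun u v ↦ R u v ∧ f u < g v) A B) ≤
      #(interedges (fun u v ↦ R u v ∧ f u < g v) {u ∈ A | f u < p} {v ∈ B | g v < p}) +
      #(interedges (fun u v ↦ R u v ∧ f u < g v) {u ∈ A | p ≤ f u} {v ∈ B | p < g v}) +
      #(interedges R {u ∈ A | f u < p} {v ∈ B | p ≤ g v}) := by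
  refine (card_le_card fun ⟨u, v⟩ huv ↦ ?_).trans <|
    (card_union_le (_ ∪ _) _).trans <| Nat.add_le_add_right (card_union_le _ _) _
  simp only [mem_union, mk_mem_interedges_iff, mem_filter] at huv ⊢
  grind

open scoped Classical in
theorem HasLinearZarankiewiczBound.card_interedges_and_lt_le
    (hR : HasLinearZarankiewiczBound R r M) (f : V → α) (g : W → α) {k : ℕ}
    {A : Finset V} {B : Finset W} (hB : #(B.image g) < 2 ^ k)
    (hfree : BicliqueFree (fun u v ↦ R u v ∧ f u < g v) r A B) :
    #(interedges (fun u v ↦ R u v ∧ f u < g v) A B) ≤ k * M * (#A + #B) := by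
  induction k generalizing A B with
  | zero =>
    obtain rfl : B = ∅ := by simpa using hB
    simp [interedges]
  | succ k ih =>
    obtain rfl | hne := B.eq_empty_or_nonempty
    · simp [interedges]
    obtain ⟨p, -, hlt, hgt⟩ := exists_median (hne.image g)
    rw [pow_succ] at hB
    rw [filter_image] at hlt hgt
    set A₀ := {u ∈ A | f u < p}
    set A₁ := {u ∈ A | p ≤ f u}
    have hA₀ : A₀ ⊆ A := filter_subset _ _
    have hA₁ : A₁ ⊆ A := filter_subset _ _
    set B₀ := {v ∈ B | g v < p}
    set B₁ := {v ∈ B | p < g v}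
    set B₁' := {v ∈ B | p ≤ g v}
    have hB₀ : B₀ ⊆ B := filter_subset _ _
    have hB₁ : B₁ ⊆ B := filter_subset _ _
    have hB₁' : B₁' ⊆ B := filter_subset _ _
    have below := ih (by omega) (hfree.mono hA₀ hB₀ fun _ _ _ _ ↦ id)
    have above := ih (by omega) (hfree.mono hA₁ hB₁ fun _ _ _ _ ↦ id)
    have across := hR A₀ B₁' <| hfree.mono hA₀ hB₁' fun u hu v hv h ↦
      ⟨h, (mem_filter.1 hu).2.trans_le (mem_filter.1 hv).2⟩
    have card_A : #A₀ + #A₁ = #A := by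
      simpa only [not_lt] using card_filter_add_card_filter_not (s := A) (f · < p)
    have card_B : #B₀ + #B₁ ≤ #B := by
      rw [← card_union_of_disjoint (disjoint_filter.2 fun _ _ ↦ not_lt_of_gt)]
      exact card_le_card (union_subset hB₀ hB₁)
    calc
      _ ≤ _ := card_interedges_and_lt_le_add R f g A B p
      _ ≤ k * M * (#A₀ + #B₀) + k * M * (#A₁ + #B₁) + M * (#A₀ + #B₁') := by gcongr
      _ = k * M * ((#A₀ + #A₁) + (#B₀ + #B₁)) + M * (#A₀ + #B₁') := by ring
      _ ≤ k * M * (#A + #B) + M * (#A + #B) := by gcongr; exact card_A.le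
      _ = (k + 1) * M * (#A + #B) := by ring

theorem hasLinearZarankiewiczBound_forall_lt [Fintype W] {k : ℕ} (hk : Fintype.card W < 2 ^ k)
    (r : ℕ) (J : Finset κ) (x : κ → V → α) (y : κ → W → α) :
    HasLinearZarankiewiczBound (fun u v ↦ ∀ j ∈ J, x j u < y j v) r (r * k ^ #J) := by
  classical
  induction J using Finset.induction_on with
  | empty => simpa using hasLinearZarankiewiczBound_of_forall (by simp)
  | insert j J hj ih =>
    intro A B hfree
    simp only [forall_mem_insert, and_comm (a := _ < _)] at hfree ⊢
    have hB : #(B.image (y j)) < 2 ^ k := (card_image_le.trans (card_le_univ B)).trans_lt hk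
    convert ih.card_interedges_and_lt_le (x j) (y j) hB hfree using 1
    · congr!
    · rw [card_insert_of_notMem hj]
      ring

end Bipartite

section Graph

variable {V : Type*} {G : SimpleGraph V} {s : ℕ}

open SimpleGraph

theorem completeBipartiteGraph_free_iff_not_exists_disjoint :
    (completeBipartiteGraph (Fin s) (Fin s)).Free G ↔
      ¬ ∃ S T : Finset V, Disjoint S T ∧ #S = s ∧ #T = s ∧ ∀ u ∈ S, ∀ v ∈ T, G.Adj u v := by
  rw [SimpleGraph.Free, completeBipartiteGraph_isContained_iff, Fintype.card_fin]
  refine not_congr <| exists₂_congr fun S T ↦ ⟨fun ⟨hS, hT, h⟩ ↦ ?_, fun ⟨_, hS, hT, h⟩ ↦ ?_⟩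
  · exact ⟨disjoint_coe.1 h.disjoint, hS, hT, fun u hu v hv ↦ h hu hv⟩
  · exact ⟨hS, hT, fun u hu v hv ↦ h u hu v hv⟩

theorem bicliqueFree_two_mul_of_free (hG : (completeBipartiteGraph (Fin s) (Fin s)).Free G)
    {R : V → V → Prop} (hR : ∀ u v, u ≠ v → R u v → G.Adj u v) (A B : Finset V) :
    BicliqueFree R (2 * s) A B := by
  classical
  rintro ⟨S, -, T, -, hS, hT, hST⟩
  obtain ⟨S', hS', hS's⟩ : ∃ S' ⊆ S, #S' = s := exists_subset_card_eq (by omega)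
  have hTs : s ≤ #(T \ S') := by
    have := le_card_sdiff S' T
    omega
  obtain ⟨T', hT', hT's⟩ := exists_subset_card_eq hTs
  have hdisj : Disjoint S' T' := disjoint_sdiff.mono_right hT'
  refine completeBipartiteGraph_free_iff_not_exists_disjoint.1 hG
    ⟨S', T', hdisj, hS's, hT's, fun u hu v hv ↦ ?_⟩
  exact hR u v (disjoint_iff_ne.1 hdisj u hu v hv) (hST u (hS' hu) v (mem_sdiff.1 (hT' hv)).1)

variable [Fintype V]

open scoped Classical in
theorem two_mul_ncard_edgeSet_le_sum_card_interedges {ι : Type*} [Fintype ι]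
    {R : ι → V → V → Prop} (hR : ∀ u v, G.Adj u v → ∃ i, R i u v) :
    2 * G.edgeSet.ncard ≤ ∑ i, #(interedges (R i) univ univ) := by
  rw [← coe_edgeFinset, Set.ncard_coe_finset, two_mul_card_edgeFinset]
  refine (card_le_card fun ⟨u, v⟩ huv ↦ ?_).trans card_biUnion_le
  obtain ⟨i, hi⟩ := hR u v (mem_filter.1 huv).2
  exact mem_biUnion.2 ⟨i, mem_univ i, mk_mem_interedges_iff.2 ⟨mem_univ u, mem_univ v, hi⟩⟩

variable {α ι κ : Type*} [LinearOrder α] [Fintype ι] [Fintype κ] {x y : ι → κ → V → α}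

theorem ncard_edgeSet_le_of_adj_iff_exists_forall_lt {k : ℕ} (hk : Fintype.card V < 2 ^ k)
    (hadj : ∀ u v, u ≠ v → (G.Adj u v ↔ ∃ i, ∀ j, x i j u < y i j v))
    (hG : (completeBipartiteGraph (Fin s) (Fin s)).Free G) :
    G.edgeSet.ncard ≤ 2 * Fintype.card ι * s * Fintype.card V * k ^ Fintype.card κ := by
  classical
  have clause_le (i : ι) : #(interedges (fun u v ↦ ∀ j, x i j u < y i j v) univ univ) ≤
      2 * s * k ^ Fintype.card κ * (Fintype.card V + Fintype.card V) := by
    have bound := hasLinearZarankiewiczBound_forall_lt hk (2 * s) univ (x i) (y i)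
    simp only [mem_univ, true_imp_iff] at bound
    specialize bound univ univ <|
      bicliqueFree_two_mul_of_free hG (fun u v huv h ↦ (hadj u v huv).2 ⟨i, h⟩) univ univ
    simp only [card_univ] at bound
    convert bound
  have two_mul_le := calc
    2 * G.edgeSet.ncard ≤ ∑ i, #(interedges (fun u v ↦ ∀ j, x i j u < y i j v) univ univ) := by
      convert two_mul_ncard_edgeSet_le_sum_card_interedges fun u v h ↦ (hadj u v h.ne).1 h
    _ ≤ Fintype.card ι * (2 * s * k ^ Fintype.card κ * (Fintype.card V + Fintype.card V)) :=
      sum_le_card_nsmul _ _ _ fun i _ ↦ clause_le i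
  linarith

end Graph

theorem one_le_logb {b x : ℝ} (hb : 1 < b) (hx : b ≤ x) : 1 ≤ Real.logb b x := by
  rwa [Real.le_logb_iff_rpow_le hb (by linarith), Real.rpow_one]

theorem stmt_7_general {V α ι κ : Type*} [Fintype V] [LinearOrder α] [Fintype ι] [Fintype κ]
    {G : SimpleGraph V} {s : ℕ} {x y : ι → κ → V → α} (hV : 2 ≤ Fintype.card V)
    (hadj : ∀ u v, u ≠ v → (G.Adj u v ↔ ∃ i, ∀ j, x i j u < y i j v))
    (hG : (completeBipartiteGraph (Fin s) (Fin s)).Free G) :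
    (G.edgeSet.ncard : ℝ) ≤ 2 ^ (Fintype.card κ + 1) * Fintype.card ι * s * Fintype.card V *
      Real.logb 2 (Fintype.card V) ^ Fintype.card κ := by
  set n := Fintype.card V
  have hk : n < 2 ^ (Nat.log 2 n + 1) := Nat.lt_pow_succ_log_self one_lt_two n
  have hlog : ((Nat.log 2 n + 1 : ℕ) : ℝ) ≤ 2 * Real.logb 2 n := by
    have floor_le : (Nat.log 2 n : ℝ) ≤ Real.logb 2 n := Real.natLog_le_logb n 2
    push_cast
    linarith [one_le_logb one_lt_two (mod_cast hV : (2 : ℝ) ≤ n)]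
  calc (G.edgeSet.ncard : ℝ)
      ≤ 2 * Fintype.card ι * s * n * ((Nat.log 2 n + 1 : ℕ) : ℝ) ^ Fintype.card κ :=
        mod_cast ncard_edgeSet_le_of_adj_iff_exists_forall_lt hk hadj hG
    _ ≤ 2 * Fintype.card ι * s * n * (2 * Real.logb 2 n) ^ Fintype.card κ := by gcongr
    _ = _ := by ring

/-- Every `K_{s,s}`-free dnf-semilinear graph of complexity `(t, ℓ)` in
dimension `d` on `n` vertices has at most `O(s · n (log₂ n)^{t+1})` edges,
where the constant depends only on `t` and `ℓ`. -/
theorem stmt_7 (t l : ℕ) (ht : 1 ≤ t) (hl : 1 ≤ l) :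
    ∃ C : ℝ, 0 < C ∧ ∀ d : ℕ, 1 ≤ d → ∀ s : ℕ, 1 ≤ s → ∀ n : ℕ, 2 ≤ n →
      ∀ (V : Type) [Fintype V] [DecidableEq V], Fintype.card V = n →
      ∀ (G : SimpleGraph V) (φ : V → Fin d → ℝ)
        (a b : Fin l → Fin t → Fin d → ℝ) (c : Fin l → Fin t → ℝ),
      (∀ u v : V, u ≠ v →
        (G.Adj u v ↔ ∃ i : Fin l, ∀ j : Fin t,
          (∑ k, a i j k * φ u k) + (∑ k, b i j k * φ v k) + c i j < 0)) →
      (¬ ∃ S T : Finset V, Disjoint S T ∧ S.card = s ∧ T.card = s ∧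
        ∀ x ∈ S, ∀ y ∈ T, G.Adj x y) →
      (G.edgeSet.ncard : ℝ) ≤ C * (s : ℝ) * (n : ℝ) * (Real.logb 2 n) ^ (t + 1) := by
  refine ⟨2 ^ (t + 1) * l, by positivity, fun d _ s _ n hn V _ _ hV G φ a b c hadj hfree ↦ ?_⟩
  subst hV
  have bound := stmt_7_general (x := fun i j u ↦ (∑ k, a i j k * φ u k) + c i j)
    (y := fun i j v ↦ -∑ k, b i j k * φ v k) hn
    (fun u v huv ↦ by simp only [hadj u v huv, lt_neg_iff_add_neg, add_right_comm])
    (completeBipartiteGraph_free_iff_not_exists_disjoint.2 hfree)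
  simp only [Fintype.card_fin] at bound
  refine bound.trans ?_
  gcongr
  · exact one_le_logb one_lt_two (mod_cast hn)
  · exact t.le_succ
end

section
/- Every capped bigraph is a two-dimensional comparability bigraph: if G = (L ∪ R, E) is a finite bipartite graph where L, R ⊆ ℕ, every edge joins L to R, and for all i < j in L and k < ℓ in R, ik ∈ E and jℓ ∈ E imply iℓ ∈ E, then there exists a map φ : L ∪ R → ℝ² such that for all ℓ ∈ L and r ∈ R, ℓr ∈ E if and only if both coordinates of φ(ℓ) are strictly smaller than the corresponding coordinates of φ(r). -/
/-!
For a relation `E` with the X-property, `E a b` holds if and only if `b` lies weakly above some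
neighbour `k` of `a` and `a` lies weakly below some neighbour `j` of `b`: unless `k = b` or `j = a`,
the X-property applies to the edges `E a k` and `E j b`. So with `U` the upper closure of the
neighbours of `a` and `D` the lower closure of the neighbours of `b`, adjacency means `b ∈ U` and
`a ∈ D`. In a linear order these are the strict inequalities `U < Ioi b` (upper sets being ordered
by reverse inclusion) and `Iio a < D`, and an embedding of both chains of sets into `ℝ`, which
summable positive weights provide over a countable order, turns them into coordinates.
-/

/-- The X-property of a relation. A capped bigraph is a bipartite graph on two linearly ordered
parts whose edge relation, read from the first part to the second, has this property. -/
def HasXProperty {α β : Type*} [LT α] [LT β] (E : α → β → Prop) : Prop :=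
  ∀ ⦃a b c d⦄, a < b → c < d → E a c → E b d → E a d

theorem HasXProperty.iff_mem_upperClosure_and_mem_lowerClosure {α β : Type*} [PartialOrder α]
    [PartialOrder β] {E : α → β → Prop} (hE : HasXProperty E) {a : α} {b : β} :
    E a b ↔ b ∈ upperClosure {k | E a k} ∧ a ∈ lowerClosure {j | E j b} := by
  refine ⟨fun hab => ⟨subset_upperClosure hab, subset_lowerClosure hab⟩, ?_⟩
  rintro ⟨⟨k, hak, hkb⟩, ⟨j, hjb, haj⟩⟩
  obtain rfl | hkb := hkb.eq_or_lt
  · exact hak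
  obtain rfl | haj := haj.eq_or_lt
  · exact hjb
  exact hE haj hkb hak hjb

section LinearOrder

variable {α : Type*} [LinearOrder α] {a : α}

theorem lowerSet_Iio_lt_iff_mem {s : LowerSet α} : LowerSet.Iio a < s ↔ a ∈ s := by
  rw [← not_le, not_iff_comm]
  exact ⟨fun ha b hb => lt_of_not_ge fun hab => ha (s.lower hab hb),
    fun hs ha => lt_irrefl a (hs ha)⟩

theorem upperSet_lt_Ioi_iff_mem {s : UpperSet α} : s < UpperSet.Ioi a ↔ a ∈ s := by
  rw [← not_le, not_iff_comm]
  exact ⟨fun ha b hb => lt_of_not_ge fun hba => ha (s.upper hba hb),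
    fun hs ha => lt_irrefl a (hs ha)⟩

end LinearOrder

section Countable

variable (α : Type*) [Countable α]

theorem exists_strictMono_set_real : ∃ f : Set α → ℝ, StrictMono f := by
  have := Encodable.ofCountable α
  obtain ⟨w, w_pos, c, hw, -⟩ := posSumOfEncodable one_pos α
  refine ⟨fun s => ∑' i, s.indicator w i, fun s t hst => ?_⟩
  obtain ⟨a, hat, has⟩ := Set.exists_of_ssubset hst
  refine Summable.tsum_lt_tsum (i := a)
    (Set.indicator_le_indicator_of_subset hst.subset fun i => (w_pos i).le) ?_
    (hw.summable.indicator s) (hw.summable.indicator t)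
  simpa only [Set.indicator_of_mem hat, Set.indicator_of_notMem has] using w_pos a

theorem exists_strictMono_lowerSet_real [LE α] : ∃ f : LowerSet α → ℝ, StrictMono f :=
  have ⟨f, hf⟩ := exists_strictMono_set_real α
  ⟨fun s => f s, fun _ _ hst => hf hst⟩

theorem exists_strictMono_upperSet_real [LE α] : ∃ f : UpperSet α → ℝ, StrictMono f :=
  have ⟨f, hf⟩ := exists_strictMono_set_real α
  ⟨fun s => -f s, fun _ _ hst => neg_lt_neg (hf hst)⟩

end Countable

theorem stmt_8_general {α β : Type*} [LinearOrder α] [LinearOrder β] [Countable α] [Countable β]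
    {E : α → β → Prop} (hE : HasXProperty E) :
    ∃ (φ : α → ℝ × ℝ) (ψ : β → ℝ × ℝ), ∀ a b,
      E a b ↔ (φ a).1 < (ψ b).1 ∧ (φ a).2 < (ψ b).2 := by
  obtain ⟨f, hf⟩ := exists_strictMono_upperSet_real β
  obtain ⟨g, hg⟩ := exists_strictMono_lowerSet_real α
  refine ⟨fun a => (f (upperClosure {k | E a k}), g (LowerSet.Iio a)),
    fun b => (f (UpperSet.Ioi b), g (lowerClosure {j | E j b})), fun a b => ?_⟩
  rw [hf.lt_iff_lt, hg.lt_iff_lt, upperSet_lt_Ioi_iff_mem, lowerSet_Iio_lt_iff_mem,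
    ← hE.iff_mem_upperClosure_and_mem_lowerClosure]

/-- Every capped bigraph is a two-dimensional comparability bigraph. -/
theorem stmt_8 (L R : Finset ℕ) (hdisj : Disjoint L R) (E : ℕ → ℕ → Prop)
    (hX : ∀ i ∈ L, ∀ j ∈ L, ∀ k ∈ R, ∀ l ∈ R,
      i < j → k < l → E i k → E j l → E i l) :
    ∃ φ : ℕ → ℝ × ℝ, ∀ ℓ ∈ L, ∀ r ∈ R,
      (E ℓ r ↔ (φ ℓ).1 < (φ r).1 ∧ (φ ℓ).2 < (φ r).2) := by
  classical
  obtain ⟨φ, ψ, h⟩ := stmt_8_general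
    (show HasXProperty fun i r => i ∈ L ∧ r ∈ R ∧ E i r by grind [HasXProperty])
  exact ⟨L.piecewise φ ψ, by grind [Finset.piecewise, Finset.disjoint_right]⟩
end

section
/- There exists a constant C > 0 such that for all n ≥ 2, every grid intersection graph on n vertices admits a biclique cover of size at most C · n · (log₂ n)⁴. -/
open scoped Finset

/-- `r` is the union of the relations `p j a = q j b`, `j : J`. Relations of this form are called
difunctional: such a relation is the disjoint union of the bicliques `p j ⁻¹' {l} × q j ⁻¹' {l}`
over the labels `l`, so that, altogether, a point lies in at most `|J|` bicliques. -/
def IsDifunctionalUnion (J : Type*) {α β : Type*} (r : α → β → Prop) : Prop :=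
  ∃ (L : Type) (p : J → α → L) (q : J → β → L), ∀ a b, r a b ↔ ∃ j, p j a = q j b

lemma lt_iff_exists_div_two_pow_eq_succ {k a b : ℕ} (hb : b < 2 ^ k) :
    a < b ↔ ∃ j : Fin k, a / 2 ^ (j : ℕ) + 1 = b / 2 ^ (j : ℕ) := by
  refine ⟨fun hab ↦ ?_, fun ⟨j, hj⟩ ↦ lt_of_not_ge fun hba ↦ ?_⟩
  swap
  · have hdiv : b / 2 ^ (j : ℕ) ≤ a / 2 ^ (j : ℕ) := Nat.div_le_div_right hba
    omega
  induction k generalizing a b with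
  | zero => omega
  | succ k ih =>
    by_cases hsucc : a + 1 = b
    · exact ⟨0, by simpa using hsucc⟩
    · obtain ⟨j, hj⟩ := ih (a := a / 2) (b := b / 2) (by omega) (by omega)
      exact ⟨j.succ, by simpa [pow_succ', Nat.div_div_eq_div_mul] using hj⟩

lemma exists_rank_lt_iff_le {α β X : Type*} [Fintype α] [LinearOrder X] (f : α → X) (g : β → X) :
    ∃ (f' : α → ℕ) (g' : β → ℕ), (∀ b, g' b ≤ Fintype.card α) ∧
      ∀ a b, f a ≤ g b ↔ f' a < g' b := by
  refine ⟨fun a ↦ #{c | f c < f a}, fun b ↦ #{c | f c ≤ g b}, fun b ↦ Finset.card_le_univ _,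
    fun a b ↦ ⟨fun hab ↦ Finset.card_lt_card ?_, ?_⟩⟩
  · refine (Finset.ssubset_iff_of_subset ?_).2 ⟨a, by simpa using hab, by simp⟩
    exact Finset.monotone_filter_right _ fun c _ hc ↦ hc.le.trans hab
  · contrapose!
    exact fun hba ↦
      Finset.card_le_card <| Finset.monotone_filter_right _ fun c _ hc ↦ hc.trans_lt hba

namespace IsDifunctionalUnion

variable {J K α β : Type*}

lemma and {r s : α → β → Prop} (hr : IsDifunctionalUnion J r) (hs : IsDifunctionalUnion K s) :
    IsDifunctionalUnion (J × K) fun a b ↦ r a b ∧ s a b := by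
  obtain ⟨L, p, q, hpq⟩ := hr
  obtain ⟨L', p', q', hpq'⟩ := hs
  refine ⟨L × L', fun i a ↦ (p i.1 a, p' i.2 a), fun i b ↦ (q i.1 b, q' i.2 b), fun a b ↦ ?_⟩
  simp only [hpq, hpq', Prod.mk.injEq, Prod.exists, exists_and_left, exists_and_right]

lemma of_le {X : Type*} [Fintype α] [LinearOrder X] {k : ℕ} (hk : Fintype.card α < 2 ^ k)
    (f : α → X) (g : β → X) : IsDifunctionalUnion (Fin k) fun a b ↦ f a ≤ g b := by
  obtain ⟨f', g', hg', hfg⟩ := exists_rank_lt_iff_le f g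
  exact ⟨ℕ, fun j a ↦ f' a / 2 ^ (j : ℕ) + 1, fun j b ↦ g' b / 2 ^ (j : ℕ), fun a b ↦
    (hfg a b).trans <| lt_iff_exists_div_two_pow_eq_succ <| (hg' b).trans_lt hk⟩

lemma of_mem_Icc {X : Type*} [Fintype α] [LinearOrder X] {k : ℕ} (hk : Fintype.card α < 2 ^ k)
    (l u : α → X) (f : β → X) :
    IsDifunctionalUnion (Fin k × Fin k) fun a b ↦ f b ∈ Set.Icc (l a) (u a) :=
  (of_le hk l f).and (of_le (X := Xᵒᵈ) hk u f)

lemma flip {r : α → β → Prop} (hr : IsDifunctionalUnion J r) :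
    IsDifunctionalUnion J fun b a ↦ r a b := by
  obtain ⟨L, p, q, hpq⟩ := hr
  exact ⟨L, q, p, fun b a ↦ by simp only [hpq, eq_comm]⟩

end IsDifunctionalUnion

section BicliqueCover

variable {V : Type*} {G : SimpleGraph V}

lemma exists_isBicliqueCover_coverSize_eq {ι : Type*} [Fintype ι] {A B : ι → Finset V}
    (hadj : ∀ i, ∀ a ∈ A i, ∀ b ∈ B i, G.Adj a b)
    (hcover : ∀ u v, G.Adj u v → ∃ i, (u ∈ A i ∧ v ∈ B i) ∨ (v ∈ A i ∧ u ∈ B i)) :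
    ∃ (m : ℕ) (A' B' : Fin m → Finset V),
      IsBicliqueCover G A' B' ∧ coverSize A' B' = ∑ i, (#(A i) + #(B i)) := by
  let e := (Fintype.equivFin ι).symm
  refine ⟨Fintype.card ι, A ∘ e, B ∘ e, ⟨fun i ↦ ?_, fun i ↦ hadj (e i), fun u v huv ↦ ?_⟩,
    e.sum_comp fun i ↦ #(A i) + #(B i)⟩
  · exact Finset.disjoint_left.2 fun v hA hB ↦ G.irrefl (hadj _ v hA v hB)
  · obtain ⟨i, hi⟩ := hcover u v huv
    exact ⟨e.symm i, by simpa using hi⟩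

lemma sum_card_fiber_le_card {α L : Type*} [Fintype α] [DecidableEq L] (f : α → L)
    (s : Finset L) : ∑ l : s, #{a | f a = l} ≤ Fintype.card α := by
  rw [Finset.sum_coe_sort s fun l ↦ #{a | f a = l}, Finset.sum_card_fiberwise_eq_card_filter]
  exact Finset.card_le_univ _

lemma card_add_card_le_card_of_disjoint {α : Type*} [Fintype α] {s t : Set α} [Fintype s]
    [Fintype t] (hst : Disjoint s t) : Fintype.card s + Fintype.card t ≤ Fintype.card α := by
  classical
  rw [← Set.toFinset_card, ← Set.toFinset_card,
    ← Finset.card_union_of_disjoint (Set.disjoint_toFinset.2 hst)]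
  exact Finset.card_le_univ _

lemma exists_isBicliqueCover_of_isDifunctionalUnion [Fintype V] {J : Type*} [Fintype J]
    {s t : Set V} (hG : G.IsBipartiteWith s t)
    (hr : IsDifunctionalUnion J fun (u : s) (v : t) ↦ G.Adj u v) :
    ∃ (m : ℕ) (A B : Fin m → Finset V),
      IsBicliqueCover G A B ∧ coverSize A B ≤ Fintype.card J * Fintype.card V := by
  classical
  obtain ⟨L, p, q, hpq⟩ := hr
  let labels : Finset L := Finset.univ.image fun i : J × s ↦ p i.1 i.2
  let A (i : J × labels) : Finset V :=
    ({u : s | p i.1 u = i.2} : Finset s).map (.subtype _)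
  let B (i : J × labels) : Finset V :=
    ({v : t | q i.1 v = i.2} : Finset t).map (.subtype _)
  have hadj (i) : ∀ a ∈ A i, ∀ b ∈ B i, G.Adj a b := by
    simp only [A, B, Finset.mem_map, Finset.mem_filter_univ]
    rintro _ ⟨u, hu, rfl⟩ _ ⟨v, hv, rfl⟩
    exact (hpq u v).2 ⟨i.1, hu.trans hv.symm⟩
  have hcover {u v} (hu : u ∈ s) (hv : v ∈ t) (huv : G.Adj u v) : ∃ i, u ∈ A i ∧ v ∈ B i := by
    obtain ⟨j, hj⟩ := (hpq ⟨u, hu⟩ ⟨v, hv⟩).1 huv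
    have hlabel : p j ⟨u, hu⟩ ∈ labels := Finset.mem_image_of_mem _ (Finset.mem_univ (j, _))
    exact ⟨(j, ⟨_, hlabel⟩), by simp [A, hu], by simp [B, hv, hj]⟩
  have hsize (j : J) : ∑ l, (#(A (j, l)) + #(B (j, l))) ≤ Fintype.card V := by
    simp only [A, B, Finset.card_map, Finset.sum_add_distrib]
    calc _ ≤ Fintype.card s + Fintype.card t :=
          add_le_add (sum_card_fiber_le_card (p j) labels) (sum_card_fiber_le_card (q j) labels)
      _ ≤ Fintype.card V := card_add_card_le_card_of_disjoint hG.disjoint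
  obtain ⟨m, A', B', hcov, hcard⟩ := exists_isBicliqueCover_coverSize_eq hadj fun u v huv ↦ by
    obtain ⟨hu, hv⟩ | ⟨hu, hv⟩ := hG.mem_of_adj huv
    · exact (hcover hu hv huv).imp fun _ ↦ Or.inl
    · exact (hcover hv hu huv.symm).imp fun _ ↦ Or.inr
  refine ⟨m, A', B', hcov, ?_⟩
  rw [hcard, Fintype.sum_prod_type]
  exact Finset.sum_le_card_nsmul _ _ _ fun j _ ↦ hsize j

lemma exists_isBicliqueCover_of_adj_iff_mem_Icc [Fintype V] {X Y : Type*} [LinearOrder X]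
    [LinearOrder Y] {s t : Set V} (hG : G.IsBipartiteWith s t)
    (x₁ x₂ : s → X) (x : t → X) (y₁ y₂ : t → Y) (y : s → Y)
    (hadj : ∀ (u : s) (v : t),
      G.Adj u v ↔ x v ∈ Set.Icc (x₁ u) (x₂ u) ∧ y u ∈ Set.Icc (y₁ v) (y₂ v)) :
    ∃ (m : ℕ) (A B : Fin m → Finset V), IsBicliqueCover G A B ∧
      coverSize A B ≤ Fintype.card V * (Nat.log 2 (Fintype.card V) + 1) ^ 4 := by
  classical
  have hcard (c : Set V) [Fintype c] : Fintype.card c < 2 ^ (Nat.log 2 (Fintype.card V) + 1) :=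
    (set_fintype_card_le_univ c).trans_lt (Nat.lt_pow_succ_log_self one_lt_two _)
  have hunion := (IsDifunctionalUnion.of_mem_Icc (hcard s) x₁ x₂ x).and
    (IsDifunctionalUnion.of_mem_Icc (hcard t) y₁ y₂ y).flip
  simp only [← hadj] at hunion
  obtain ⟨m, A, B, hcover, hsize⟩ := exists_isBicliqueCover_of_isDifunctionalUnion hG hunion
  refine ⟨m, A, B, hcover, hsize.trans_eq ?_⟩
  simp only [Fintype.card_prod, Fintype.card_fin]
  ring

lemma isBipartiteWith_of_adj_ne (c : V → Bool) (hc : ∀ u v, G.Adj u v → c u ≠ c v) :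
    G.IsBipartiteWith {v | c v = true} {v | c v = false} where
  disjoint := Set.disjoint_left.2 fun v (htrue : c v = true) ↦ by simp [htrue]
  mem_of_adj u v huv := by
    have := hc u v huv
    cases hu : c u <;> cases hv : c v <;> simp_all

end BicliqueCover

lemma Icc_prod_singleton_inter_singleton_prod_Icc_nonempty {X Y : Type*} [Preorder X] [Preorder Y]
    {x₁ x₂ x : X} {y₁ y₂ y : Y} :
    ((Set.Icc x₁ x₂ ×ˢ {y}) ∩ ({x} ×ˢ Set.Icc y₁ y₂)).Nonempty ↔
      x ∈ Set.Icc x₁ x₂ ∧ y ∈ Set.Icc y₁ y₂ := by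
  rw [Set.prod_inter_prod, Set.prod_nonempty_iff, Set.inter_singleton_nonempty,
    Set.singleton_inter_nonempty]

lemma natLog_add_one_le_two_mul_logb {n : ℕ} (hn : 2 ≤ n) :
    ((Nat.log 2 n + 1 : ℕ) : ℝ) ≤ 2 * Real.logb 2 n := by
  have hlog : (Nat.log 2 n : ℝ) ≤ Real.logb 2 n := Real.natLog_le_logb n 2
  have hone : 1 ≤ Nat.log 2 n := Nat.log_pos one_lt_two hn
  calc ((Nat.log 2 n + 1 : ℕ) : ℝ) ≤ (2 * Nat.log 2 n : ℕ) := by gcongr; omega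
    _ ≤ 2 * Real.logb 2 n := by push_cast; gcongr

lemma mul_natLog_add_one_pow_four_le {n : ℕ} (hn : 2 ≤ n) :
    ((n * (Nat.log 2 n + 1) ^ 4 : ℕ) : ℝ) ≤ 16 * n * Real.logb 2 n ^ 4 :=
  calc ((n * (Nat.log 2 n + 1) ^ 4 : ℕ) : ℝ) = n * ((Nat.log 2 n + 1 : ℕ) : ℝ) ^ 4 := by
        push_cast; rfl
    _ ≤ n * (2 * Real.logb 2 n) ^ 4 := by gcongr; exact natLog_add_one_le_two_mul_logb hn
    _ = 16 * n * Real.logb 2 n ^ 4 := by ring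

theorem stmt_12_general {V X Y : Type*} [Fintype V] [LinearOrder X] [LinearOrder Y]
    (seg : V → Set (X × Y)) (hor : V → Bool)
    (hhor : ∀ v, hor v = true → ∃ x₁ x₂ y, seg v = Set.Icc x₁ x₂ ×ˢ {y})
    (hver : ∀ v, hor v = false → ∃ x y₁ y₂, seg v = {x} ×ˢ Set.Icc y₁ y₂)
    (hdisj : ∀ u v, u ≠ v → hor u = hor v → seg u ∩ seg v = ∅)
    (G : SimpleGraph V) (hG : ∀ u v, G.Adj u v ↔ u ≠ v ∧ (seg u ∩ seg v).Nonempty) :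
    ∃ (m : ℕ) (A B : Fin m → Finset V),
      IsBicliqueCover G A B ∧
      coverSize A B ≤ Fintype.card V * (Nat.log 2 (Fintype.card V) + 1) ^ 4 := by
  have hbip : G.IsBipartiteWith {v | hor v = true} {v | hor v = false} :=
    isBipartiteWith_of_adj_ne hor fun u v huv heq ↦
      ((hG u v).1 huv).2.ne_empty (hdisj u v huv.ne heq)
  choose x₁ x₂ y hhor using fun u : {v | hor v = true} ↦ hhor u u.2
  choose x y₁ y₂ hver using fun v : {v | hor v = false} ↦ hver v v.2
  refine exists_isBicliqueCover_of_adj_iff_mem_Icc hbip x₁ x₂ x y₁ y₂ y fun u v ↦ ?_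
  have hne : (u : V) ≠ v := hbip.disjoint.ne_of_mem u.2 v.2
  rw [hG, hhor, hver, Icc_prod_singleton_inter_singleton_prod_Icc_nonempty, and_iff_right hne]

/-- Every grid intersection graph on `n` vertices admits a biclique cover of
size `O(n (log₂ n)⁴)`. -/
theorem stmt_12 :
    ∃ C : ℝ, 0 < C ∧ ∀ n : ℕ, 2 ≤ n →
      ∀ (seg : Fin n → Set (ℝ × ℝ)) (hor : Fin n → Bool),
      (∀ v, hor v = true →
        ∃ x₁ x₂ y : ℝ, x₁ ≤ x₂ ∧ seg v = Set.Icc x₁ x₂ ×ˢ {y}) →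
      (∀ v, hor v = false →
        ∃ x y₁ y₂ : ℝ, y₁ ≤ y₂ ∧ seg v = {x} ×ˢ Set.Icc y₁ y₂) →
      (∀ u v, u ≠ v → hor u = hor v → seg u ∩ seg v = ∅) →
      ∀ G : SimpleGraph (Fin n),
      (∀ u v, G.Adj u v ↔ u ≠ v ∧ (seg u ∩ seg v).Nonempty) →
      ∃ (m : ℕ) (A B : Fin m → Finset (Fin n)),
        IsBicliqueCover G A B ∧
        (coverSize A B : ℝ) ≤ C * (n : ℝ) * (Real.logb 2 n) ^ 4 := by
  refine ⟨16, by norm_num, fun n hn seg hor hhor hver hdisj G hG ↦ ?_⟩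
  obtain ⟨m, A, B, hcover, hsize⟩ := stmt_12_general seg hor
    (fun v hv ↦ let ⟨x₁, x₂, y, _, h⟩ := hhor v hv; ⟨x₁, x₂, y, h⟩)
    (fun v hv ↦ let ⟨x, y₁, y₂, _, h⟩ := hver v hv; ⟨x, y₁, y₂, h⟩) hdisj G hG
  rw [Fintype.card_fin] at hsize
  exact ⟨m, A, B, hcover, (Nat.cast_le.2 hsize).trans (mul_natLog_add_one_pow_four_le hn)⟩
end
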